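/- (The KŁR conjecture.) For every finite simple graph H with at least 3 vertices and at least one edge and every positive real β, there exist positive constants C, n₀, and ε such that the following holds. For every integer n ≥ n₀ and every integer m with m ≥ C·n^{2 − 1/m₂(H)}: |G*(H, n, m, m/n², ε)| ≤ β^m · binom(n², m)^{e(H)}, where G*(H, n, m, p, ε) is the set of graphs in G(H, n, m, p, ε) containing no canonical copy of H. -/

import Mathlib

attribute [local instance] Classical.propDecidable

/-- The `2`-density `m₂(H)` of a graph `H`: the maximum of `(e(H') - 1)/(v(H') - 2)` over
all subgraphs `H' ⊆ H` with at least `3` vertices. -/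
noncomputable def m2 {α : Type*} [Fintype α] (H : SimpleGraph α) : ℝ :=
  sSup {x : ℝ | ∃ s : Finset α, 3 ≤ s.card ∧
    x = ((Nat.card {e : Sym2 α // e ∈ H.edgeSet ∧ ∀ v ∈ e, v ∈ s} : ℝ) - 1) /
      ((s.card : ℝ) - 2)}

/-- The number of (ordered) edges of `G` from `A` to `B`. -/
noncomputable def bipCount {γ : Type*} (G : SimpleGraph γ) (A B : Finset γ) : ℕ :=
  Nat.card {e : γ × γ // e.1 ∈ A ∧ e.2 ∈ B ∧ G.Adj e.1 e.2}

/-- The edge density of `G` between `A` and `B`. -/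
noncomputable def bipDensity {γ : Type*} (G : SimpleGraph γ) (A B : Finset γ) : ℝ :=
  (bipCount G A B : ℝ) / ((A.card : ℝ) * (B.card : ℝ))

/-- The pair `(A, B)` is `(ε, p)`-regular in `G`. -/
def EpsPRegular {γ : Type*} (G : SimpleGraph γ) (ε p : ℝ) (A B : Finset γ) : Prop :=
  ∀ W₁ ⊆ A, ∀ W₂ ⊆ B, ε * (A.card : ℝ) ≤ (W₁.card : ℝ) → ε * (B.card : ℝ) ≤ (W₂.card : ℝ) →
    |bipDensity G W₁ W₂ - bipDensity G A B| ≤ ε * p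

/-- The fibre `V_i` over the vertex `i` of `H` in the blow-up, as a finset. -/
def fibre (h n : ℕ) (i : Fin h) : Finset (Fin h × Fin n) :=
  Finset.univ.filter fun v => v.1 = i

/-- `G ∈ 𝒢(H, n, m, p, ε)`: the vertex set of `G` is the disjoint union of the fibres
`V₁, …, V_{v(H)}`, each of size `n`; all edges of `G` lie between fibres `V_i, V_j` with
`{i, j} ∈ E(H)`, and for each edge `{i, j}` of `H` the bipartite graph of `G` between
`V_i` and `V_j` is `(ε, p)`-regular and has exactly `m` edges. -/
def InKLRFamily {h n : ℕ} (H : SimpleGraph (Fin h)) (m : ℕ) (p ε : ℝ)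
    (G : SimpleGraph (Fin h × Fin n)) : Prop :=
  (∀ a b : Fin h × Fin n, G.Adj a b → H.Adj a.1 b.1) ∧
    ∀ i j : Fin h, H.Adj i j →
      bipCount G (fibre h n i) (fibre h n j) = m ∧
        EpsPRegular G ε p (fibre h n i) (fibre h n j)

/-- `G` contains a canonical copy of `H`: a copy in which the image of each vertex `i` of
`H` lies in the fibre `V_i`. -/
def HasCanonicalCopy {h n : ℕ} (H : SimpleGraph (Fin h))
    (G : SimpleGraph (Fin h × Fin n)) : Prop :=
  ∃ ψ : Fin h → Fin n, ∀ i j : Fin h, H.Adj i j → G.Adj (i, ψ i) (j, ψ j)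

/-!
A graph without canonical copies of `H` is an independent set in the hypergraph whose vertices are
the potential edges of the blow-up of `H` and whose hyperedges are the canonical copies of `H`.
The definition of `m₂(H)` says exactly that this hypergraph has the codegrees needed by the
container theorem once `m ≥ C n^(2 - 1/m₂(H))`. Hence each such graph has a fingerprint `T` of at
most a small multiple of `m` edges that determines a container `D(T)` of the graph with few
canonical copies of `H`.

A weak regularity partition of the container and the counting lemma then produce an edge `e` of `H`
and a union `Z` of boundedly many products of parts, covering a positive proportion of all pairs,
on which the container has density at most `δ`. Regularity of the graph forces it to have at least
`m / (8 e(H))` edges in `Z` for this `e`, all of them inside a set of at most `δ n²` pairs that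
depends only on `T`. For `δ` small enough in terms of `β`, the number of graphs with this property
is at most `β^m binom(n², m)^(e(H))`.
-/

namespace KLR

open Finset

section Fingerprint

variable {Ω ι κ : Type*}

/-- The maps computed by a container algorithm: the fingerprint `T X` is the part of the input `X`
that the algorithm has found in `X` when it stops, and `D X` is its output. Both are unchanged if
`X` is replaced by any set between `T X` and `X`, so `D X` is determined by `T X`. -/
structure IsFingerprint (T : Finset Ω → Finset Ω) (D : Finset Ω → ι) : Prop where
  subset (X : Finset Ω) : T X ⊆ X
  eq_of_subset {X Y : Finset Ω} : T X ⊆ Y → Y ⊆ X → T Y = T X ∧ D Y = D X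

/-- Some container algorithm with fingerprints of size at most `ℓ` turns every input `X` into an
output `y` such that `P X y`. -/
def HasFingerprint (ℓ : ℝ) (P : Finset Ω → ι → Prop) : Prop :=
  ∃ (T : Finset Ω → Finset Ω) (D : Finset Ω → ι),
    IsFingerprint T D ∧ (∀ X, (#(T X) : ℝ) ≤ ℓ) ∧ ∀ X, P X (D X)

variable {ℓ ℓ' : ℝ} {P P' : Finset Ω → ι → Prop}

theorem HasFingerprint.mono (hP : HasFingerprint ℓ P) (hℓ : ℓ ≤ ℓ')
    (h : ∀ X y, P X y → P' X y) : HasFingerprint ℓ' P' := by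
  obtain ⟨T, D, hTD, hT, hD⟩ := hP
  exact ⟨T, D, hTD, fun X => (hT X).trans hℓ, fun X => h X _ (hD X)⟩

theorem HasFingerprint.const (hℓ : 0 ≤ ℓ) (y : ι) (h : ∀ X, P X y) : HasFingerprint ℓ P :=
  ⟨fun _ => ∅, fun _ => y, ⟨fun _ => empty_subset _, fun _ _ => ⟨rfl, rfl⟩⟩, by simpa using hℓ, h⟩

theorem HasFingerprint.bind {Q : ι → Finset Ω → κ → Prop} (hP : HasFingerprint ℓ P)
    (hQ : ∀ y, HasFingerprint ℓ' (Q y)) :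
    HasFingerprint (ℓ + ℓ') fun X z => ∃ y, P X y ∧ Q y X z := by
  obtain ⟨T₁, D₁, h₁, hT₁, hD₁⟩ := hP
  choose T₂ D₂ h₂ hT₂ hD₂ using hQ
  refine ⟨fun X => T₁ X ∪ T₂ (D₁ X) X, fun X => D₂ (D₁ X) X, ⟨?_, ?_⟩, fun X => ?_,
    fun X => ⟨D₁ X, hD₁ X, hD₂ _ X⟩⟩
  · exact fun X => union_subset (h₁.subset X) ((h₂ _).subset X)
  · intro X Y hTY hYX
    obtain ⟨hT, hD⟩ := h₁.eq_of_subset (subset_union_left.trans hTY) hYX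
    obtain ⟨hT', hD'⟩ := (h₂ (D₁ X)).eq_of_subset (subset_union_right.trans hTY) hYX
    simp only [hT, hD, hT', hD', and_self]
  · calc (#(T₁ X ∪ T₂ (D₁ X) X) : ℝ) ≤ #(T₁ X) + #(T₂ (D₁ X) X) :=
          mod_cast card_union_le _ _
      _ ≤ ℓ + ℓ' := add_le_add (hT₁ X) (hT₂ _ X)

theorem HasFingerprint.ite_mem (a : Ω) (hP : HasFingerprint ℓ P)
    (hP' : HasFingerprint (ℓ + 1) P') :
    HasFingerprint (ℓ + 1) fun X y => a ∈ X ∧ P X y ∨ a ∉ X ∧ P' X y := by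
  obtain ⟨T, D, h, hT, hD⟩ := hP
  obtain ⟨T', D', h', hT', hD'⟩ := hP'
  refine ⟨fun X => if a ∈ X then insert a (T X) else T' X,
    fun X => if a ∈ X then D X else D' X, ⟨fun X => ?_, fun {X Y} hTY hYX => ?_⟩,
    fun X => ?_, fun X => ?_⟩ <;> by_cases haX : a ∈ X
  · simpa only [haX, if_true] using insert_subset haX (h.subset X)
  · simpa only [haX, if_false] using h'.subset X
  · simp only [haX, if_true] at hTY ⊢
    have haY : a ∈ Y := hTY (mem_insert_self _ _)
    obtain ⟨hTe, hDe⟩ := h.eq_of_subset ((subset_insert _ _).trans hTY) hYX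
    simp only [haY, if_true, hTe, hDe, and_self]
  · simp only [haX, if_false] at hTY ⊢
    simpa only [show a ∉ Y from fun haY => haX (hYX haY), if_false] using
      h'.eq_of_subset hTY hYX
  · simp only [haX, if_true]
    calc (#(insert a (T X)) : ℝ) ≤ #(T X) + 1 := mod_cast card_insert_le _ _
      _ ≤ ℓ + 1 := by linarith [hT X]
  · simpa only [haX, if_false] using hT' X
  · simpa only [haX, if_true, true_and, not_true, false_and, or_false] using hD X
  · simpa only [haX, if_false, false_and, not_false_eq_true, true_and, false_or] using hD' X

theorem HasFingerprint.query {Q : Ω → Finset Ω → ι → Prop} (hℓ : 0 ≤ ℓ) (g : Finset Ω) (y₀ : ι)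
    (hQ : ∀ v ∈ g, HasFingerprint ℓ (Q v)) :
    HasFingerprint (ℓ + 1) fun X y => (∃ v ∈ g, v ∈ X ∧ Q v X y) ∨ Disjoint g X ∧ y = y₀ := by
  induction g using Finset.induction_on with
  | empty => exact .const (by positivity) y₀ fun X => .inr ⟨disjoint_empty_left X, rfl⟩
  | insert a g _ ih =>
    refine ((hQ a (mem_insert_self a g)).ite_mem a
      (ih fun v hv => hQ v (mem_insert_of_mem hv))).mono le_rfl ?_
    rintro X y (⟨haX, hy⟩ | ⟨haX, ⟨v, hv, hvX, hy⟩ | ⟨hgX, hy⟩⟩)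
    · exact .inl ⟨a, mem_insert_self a g, haX, hy⟩
    · exact .inl ⟨v, mem_insert_of_mem hv, hvX, hy⟩
    · exact .inr ⟨disjoint_insert_left.2 ⟨haX, hgX⟩, hy⟩

theorem HasFingerprint.exists_output (hP : HasFingerprint ℓ P) :
    ∃ D : Finset Ω → ι, ∀ X, ∃ T ⊆ X, (#T : ℝ) ≤ ℓ ∧ P X (D T) := by
  obtain ⟨T, D, hTD, hT, hD⟩ := hP
  refine ⟨D, fun X => ⟨T X, hTD.subset X, hT X, ?_⟩⟩
  rw [(hTD.eq_of_subset Subset.rfl (hTD.subset X)).2]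
  exact hD X

end Fingerprint

section WeightedHypergraph

variable {Ω : Type*}

/-- `X` contains no edge of the weighted hypergraph `μ`. -/
def IsIndep (μ : Finset Ω → ℝ) (X : Finset Ω) : Prop := ∀ A, μ A ≠ 0 → ¬A ⊆ X

/-- The link of `v` in the weighted hypergraph `μ`, restricted to the sets with no subset in `𝒮`. -/
noncomputable def avoidingLink (μ : Finset Ω → ℝ) (𝒮 : Set (Finset Ω)) (v : Ω)
    (B : Finset Ω) : ℝ :=
  if v ∉ B ∧ ∀ S ⊆ B, S ∉ 𝒮 then μ (insert v B) else 0

variable {μ ν : Finset Ω → ℝ} {𝒮 : Set (Finset Ω)} {k : ℕ} {K M q N : ℝ} {v : Ω} {S : Finset Ω}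

theorem avoidingLink_nonneg (hμ : ∀ A, 0 ≤ μ A) (v : Ω) (B : Finset Ω) :
    0 ≤ avoidingLink μ 𝒮 v B := by
  unfold avoidingLink
  split_ifs
  exacts [hμ _, le_rfl]

theorem avoidingLink_ne_zero {B : Finset Ω} (h : avoidingLink μ 𝒮 v B ≠ 0) :
    v ∉ B ∧ μ (insert v B) ≠ 0 := by
  obtain ⟨hB, hμ⟩ := ite_ne_right_iff.1 h
  exact ⟨hB.1, hμ⟩

variable [Fintype Ω]

/-- The degree of the vertex set `S` in the hypergraph on `Ω` with edge weights `μ`. -/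
noncomputable def codeg (μ : Finset Ω → ℝ) (S : Finset Ω) : ℝ := ∑ A with S ⊆ A, μ A

/-- The weights `μ` live on sets of size `k`, and the degree of an `s`-set is at most
`K * q ^ (s - 1) / N` for every `s ≥ 1`; this is the degree condition of the container method for a
`k`-uniform hypergraph on about `N` vertices of total weight of order `1`. -/
structure IsSpread (k : ℕ) (K q N : ℝ) (μ : Finset Ω → ℝ) : Prop where
  nonneg (A : Finset Ω) : 0 ≤ μ A
  card_eq {A : Finset Ω} : μ A ≠ 0 → #A = k
  codeg_le {S : Finset Ω} : S.Nonempty → codeg μ S ≤ K * q ^ (#S - 1) / N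

theorem sum_insert_of_notMem (v : Ω) (G : Finset Ω → ℝ) :
    ∑ B with v ∉ B, G (insert v B) = ∑ A with v ∈ A, G A :=
  sum_nbij' (insert v) (·.erase v) (by simp) (by simp) (by simp +contextual)
    (by simp +contextual) (by simp)

theorem codeg_nonneg (hμ : ∀ A, 0 ≤ μ A) (S : Finset Ω) : 0 ≤ codeg μ S :=
  sum_nonneg fun A _ => hμ A

theorem sum_codeg (hν : ∀ A, ν A ≠ 0 → #A = k) : ∑ S, codeg ν S = 2 ^ k * ∑ A, ν A := by
  simp only [codeg, sum_filter]
  rw [sum_comm, mul_sum]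
  refine sum_congr rfl fun A _ => ?_
  rcases eq_or_ne (ν A) 0 with h | h
  · simp [h]
  · rw [← sum_filter, filter_subset_univ, sum_const, card_powerset, hν A h, nsmul_eq_mul]
    norm_cast

theorem codeg_avoidingLink_le (hμ : ∀ A, 0 ≤ μ A) (v : Ω) (S : Finset Ω) :
    codeg (avoidingLink μ 𝒮 v) S ≤ codeg μ (insert v S) := by
  have hsum : codeg μ (insert v S) =
      ∑ B with v ∉ B, if insert v S ⊆ insert v B then μ (insert v B) else 0 := by
    rw [sum_insert_of_notMem v fun A => if insert v S ⊆ A then μ A else 0, ← sum_filter,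
      filter_filter, codeg]
    congr! 2 with A
    exact ⟨fun h => ⟨h (mem_insert_self v S), h⟩, And.right⟩
  rw [hsum, codeg, sum_filter, sum_filter]
  refine sum_le_sum fun B _ => ?_
  unfold avoidingLink
  have hBμ := hμ (insert v B)
  have hsub : S ⊆ B → insert v S ⊆ insert v B := insert_subset_insert v
  split_ifs <;> grind

theorem codeg_avoidingLink_of_mem (hv : v ∈ S) : codeg (avoidingLink μ 𝒮 v) S = 0 :=
  sum_eq_zero fun _ hB => if_neg fun h => h.1 ((mem_filter.1 hB).2 hv)

theorem codeg_avoidingLink_of_mem_avoided (hS : S ∈ 𝒮) : codeg (avoidingLink μ 𝒮 v) S = 0 :=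
  sum_eq_zero fun _ hB => if_neg fun h => h.2 S (mem_filter.1 hB).2 hS

theorem sum_avoidingLink_le (hμ : ∀ A, 0 ≤ μ A) (v : Ω) :
    ∑ B, avoidingLink μ 𝒮 v B ≤ codeg μ {v} := by
  simpa [codeg] using codeg_avoidingLink_le (𝒮 := 𝒮) hμ v ∅

theorem sum_avoiding_le_sum_avoidingLink (hμ : ∀ A, 0 ≤ μ A)
    (hne : ∀ A, μ A ≠ 0 → A.Nonempty) :
    ∑ A with ∀ S ⊆ A, S ∉ 𝒮, μ A ≤ ∑ v, ∑ B, avoidingLink μ 𝒮 v B := by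
  set avoids : Finset Ω → Prop := fun A => ∀ S ⊆ A, S ∉ 𝒮
  have hvertex (v : Ω) :
      ∑ A with v ∈ A, (if avoids A then μ A else 0) ≤ ∑ B, avoidingLink μ 𝒮 v B := by
    rw [← sum_insert_of_notMem, sum_filter]
    refine sum_le_sum fun B _ => ?_
    have hmono : avoids (insert v B) → avoids B := fun h S hS => h S (hS.trans (subset_insert v B))
    change _ ≤ if v ∉ B ∧ avoids B then μ (insert v B) else 0
    grind [hμ (insert v B)]
  refine le_trans ?_ (sum_le_sum fun v _ => hvertex v)
  rw [sum_filter]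
  simp only [sum_filter (s := univ) (p := fun A => _ ∈ A)]
  rw [sum_comm]
  refine sum_le_sum fun A _ => ?_
  rcases eq_or_ne (μ A) 0 with hA | hA
  · simp [hA]
  · obtain ⟨v, hv⟩ := hne A hA
    calc (if avoids A then μ A else 0)
        = if v ∈ A then (if avoids A then μ A else 0) else 0 := (if_pos hv).symm
      _ ≤ _ := single_le_sum (f := fun v => if v ∈ A then (if avoids A then μ A else 0) else 0)
          (fun w _ => by split_ifs <;> simp [hμ A]) (mem_univ v)

theorem sum_sub_sum_avoiding_le (hμ : ∀ A, 0 ≤ μ A) :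
    ∑ A, μ A - ∑ A with ∀ S ⊆ A, S ∉ 𝒮, μ A ≤ ∑ S with S ∈ 𝒮, codeg μ S := by
  rw [← sum_filter_add_sum_filter_not univ (fun A => ∀ S ⊆ A, S ∉ 𝒮), add_sub_cancel_left]
  have hcodeg (S : Finset Ω) : codeg μ S = ∑ A, if S ⊆ A then μ A else 0 := sum_filter _ _
  simp only [hcodeg]
  rw [sum_comm, sum_filter]
  refine sum_le_sum fun A _ => ?_
  have hnonneg (S : Finset Ω) : 0 ≤ if S ⊆ A then μ A else 0 := by
    split_ifs
    exacts [hμ A, le_rfl]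
  split_ifs with hA
  · exact sum_nonneg fun S _ => hnonneg S
  · push Not at hA
    obtain ⟨S, hSA, hS⟩ := hA
    calc μ A = if S ⊆ A then μ A else 0 := (if_pos hSA).symm
      _ ≤ _ := single_le_sum (f := fun S => if S ⊆ A then μ A else 0) (fun S _ => hnonneg S)
          (by simpa using hS)

theorem half_le_sum_avoiding (hμ : ∀ A, 0 ≤ μ A) (hμ1 : 1 ≤ ∑ A, μ A) (hν : ∀ A, 0 ≤ ν A)
    (hνk : ∀ A, ν A ≠ 0 → #A = k) (hν1 : ∑ A, ν A ≤ 1)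
    (h𝒮 : ∀ S ∈ 𝒮, 2 ^ (k + 1) * codeg μ S ≤ codeg ν S) :
    1 / 2 ≤ ∑ A with ∀ S ⊆ A, S ∉ 𝒮, μ A := by
  have hlost : 2 ^ (k + 1) * ∑ S with S ∈ 𝒮, codeg μ S ≤ 2 ^ k := by
    calc 2 ^ (k + 1) * ∑ S with S ∈ 𝒮, codeg μ S ≤ ∑ S with S ∈ 𝒮, codeg ν S := by
          rw [mul_sum]
          exact sum_le_sum fun S hS => h𝒮 S (mem_filter.1 hS).2
      _ ≤ ∑ S, codeg ν S := sum_le_sum_of_subset_of_nonneg (filter_subset _ _) fun S _ _ =>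
          codeg_nonneg hν S
      _ = 2 ^ k * ∑ A, ν A := sum_codeg hνk
      _ ≤ 2 ^ k := mul_le_of_le_one_right (by positivity) hν1
  rw [pow_succ, mul_assoc] at hlost
  linarith [le_of_mul_le_mul_left (hlost.trans_eq (mul_one _).symm) (by positivity),
    sum_sub_sum_avoiding_le (𝒮 := 𝒮) hμ]

theorem le_card_filter_of_half_le_sum {U : Ω → ℝ} (hK : 0 < K) (hN : 0 < N)
    (hΩ : (Fintype.card Ω : ℝ) ≤ N) (hU : ∀ v, U v ≤ K / N) (hsum : 1 / 2 ≤ ∑ v, U v) :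
    N / (4 * K) ≤ #{v | 1 / (4 * N) ≤ U v} := by
  set g : Finset Ω := {v | 1 / (4 * N) ≤ U v}
  have hlarge : ∑ v ∈ g, U v ≤ #g * (K / N) := by
    simpa using sum_le_card_nsmul g U _ fun v _ => hU v
  have hsmall : ∑ v with ¬1 / (4 * N) ≤ U v, U v ≤ 1 / 4 := by
    calc ∑ v with ¬1 / (4 * N) ≤ U v, U v ≤ #{v | ¬1 / (4 * N) ≤ U v} * (1 / (4 * N)) := by
          simpa using sum_le_card_nsmul _ U _ fun v hv => (not_le.1 (mem_filter.1 hv).2).le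
      _ ≤ N * (1 / (4 * N)) := by
          gcongr
          exact le_trans (mod_cast card_le_univ _) hΩ
      _ = 1 / 4 := by field_simp
  have hmass : 1 / 4 ≤ #g * (K / N) := by
    linarith [sum_filter_add_sum_filter_not univ (fun v => 1 / (4 * N) ≤ U v) U]
  rw [← mul_div_assoc, le_div_iff₀ hN] at hmass
  rw [div_le_iff₀ (by positivity)]
  linarith

end WeightedHypergraph

section ContainerStep

variable {Ω : Type*}

/-- `D` is a set of at least `t` vertices covered by edges of `μ` that misses `X`. -/
structure Excludes (μ : Finset Ω → ℝ) (t : ℝ) (X D : Finset Ω) : Prop where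
  disjoint : Disjoint D X
  le_card : t ≤ #D
  covered {v : Ω} : v ∈ D → ∃ A, μ A ≠ 0 ∧ v ∈ A

variable {μ ν : Finset Ω → ℝ} {k : ℕ} {K M q N : ℝ} {𝒮 : Set (Finset Ω)} {v : Ω}

theorem Excludes.of_insert {t : ℝ} {X D : Finset Ω} (h : Excludes ν t X D)
    (hνμ : ∀ B, ν B ≠ 0 → ∃ u, μ (insert u B) ≠ 0) : Excludes μ t X D where
  disjoint := h.disjoint
  le_card := h.le_card
  covered hv := by
    obtain ⟨B, hB, hvB⟩ := h.covered hv
    obtain ⟨u, hu⟩ := hνμ B hB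
    exact ⟨insert u B, hu, mem_insert_of_mem hvB⟩

theorem ne_zero_or_of_add_avoidingLink_ne_zero {B : Finset Ω}
    (h : ν B + avoidingLink μ 𝒮 v B / q ≠ 0) : ν B ≠ 0 ∨ v ∉ B ∧ μ (insert v B) ≠ 0 := by
  by_cases hν : ν B = 0
  · exact .inr (avoidingLink_ne_zero fun hlink => h (by rw [hν, hlink, zero_div, add_zero]))
  · exact .inl hν

theorem IsIndep.add_avoidingLink {X : Finset Ω} (hμ : IsIndep μ X) (hν : IsIndep ν X)
    (hv : v ∈ X) : IsIndep (fun B => ν B + avoidingLink μ 𝒮 v B / q) X := by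
  intro B hB hBX
  rcases ne_zero_or_of_add_avoidingLink_ne_zero hB with hB | ⟨-, hB⟩
  · exact hν B hB hBX
  · exact hμ _ hB (insert_subset hv hBX)

variable [Fintype Ω]

/-- The vertex sets whose degree in `ν` has reached the threshold `M * q ^ (s - 1) / N`. -/
def saturated (M q N : ℝ) (ν : Finset Ω → ℝ) : Set (Finset Ω) :=
  {S | S.Nonempty ∧ M * q ^ (#S - 1) / N ≤ codeg ν S}

theorem IsSpread.add_avoidingLink (hμ : IsSpread (k + 1) K q N μ)
    (hν : IsSpread k (M + K) q N ν) (hK : 0 < K) (hN : 0 < N) (hq : 0 < q) (v : Ω) :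
    IsSpread k (M + K) q N fun B => ν B + avoidingLink μ (saturated M q N ν) v B / q where
  nonneg B := add_nonneg (hν.nonneg B) (div_nonneg (avoidingLink_nonneg hμ.nonneg v B) hq.le)
  card_eq {B} hB := by
    rcases ne_zero_or_of_add_avoidingLink_ne_zero hB with hB | ⟨hvB, hB⟩
    · exact hν.card_eq hB
    · simpa [card_insert_of_notMem hvB] using hμ.card_eq hB
  codeg_le {S} hS := by
    have hadd : codeg (fun B => ν B + avoidingLink μ (saturated M q N ν) v B / q) S =
        codeg ν S + codeg (avoidingLink μ (saturated M q N ν) v) S / q := by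
      simp only [codeg, sum_add_distrib, sum_div]
    rw [hadd]
    by_cases hsat : S ∈ saturated M q N ν
    · rw [codeg_avoidingLink_of_mem_avoided hsat, zero_div, add_zero]
      exact hν.codeg_le hS
    · have hunsat : codeg ν S < M * q ^ (#S - 1) / N := not_le.1 fun h => hsat ⟨hS, h⟩
      suffices hlink : codeg (avoidingLink μ (saturated M q N ν) v) S / q ≤
          K * q ^ (#S - 1) / N by
        rw [add_mul, add_div]
        exact add_le_add hunsat.le hlink
      by_cases hvS : v ∈ S
      · rw [codeg_avoidingLink_of_mem hvS, zero_div]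
        positivity
      · rw [div_le_iff₀ hq]
        calc codeg (avoidingLink μ (saturated M q N ν) v) S ≤ codeg μ (insert v S) :=
              codeg_avoidingLink_le hμ.nonneg v S
          _ ≤ K * q ^ (#(insert v S) - 1) / N := hμ.codeg_le (insert_nonempty v S)
          _ = K * q ^ (#S - 1) / N * q := by
              rw [card_insert_of_notMem hvS, Nat.add_sub_cancel, ← pow_sub_one_mul hS.card_ne_zero]
              ring

theorem IsSpread.le_card_heavy (hμ : IsSpread (k + 1) K q N μ)
    (hν : IsSpread k M q N ν) (hK : 0 < K) (hN : 0 < N) (hΩ : (Fintype.card Ω : ℝ) ≤ N)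
    (hμ1 : 1 ≤ ∑ A, μ A) (hν1 : ∑ B, ν B ≤ 1) :
    N / (4 * K) ≤
      #{v | 1 / (4 * N) ≤ ∑ B, avoidingLink μ (saturated (2 ^ (k + 1) * K) q N ν) v B} := by
  refine le_card_filter_of_half_le_sum hK hN hΩ (fun v => ?_) ?_
  · calc _ ≤ codeg μ {v} := sum_avoidingLink_le hμ.nonneg v
      _ ≤ K / N := by simpa using hμ.codeg_le (singleton_nonempty v)
  · refine (half_le_sum_avoiding hμ.nonneg hμ1 hν.nonneg (fun A => hν.card_eq) hν1 ?_).trans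
      (sum_avoiding_le_sum_avoidingLink hμ.nonneg fun A hA => ?_)
    · rintro S ⟨hS, hsat⟩
      calc 2 ^ (k + 1) * codeg μ S ≤ 2 ^ (k + 1) * (K * q ^ (#S - 1) / N) := by
            gcongr
            exact hμ.codeg_le hS
        _ = 2 ^ (k + 1) * K * q ^ (#S - 1) / N := by ring
        _ ≤ codeg ν S := hsat
    · exact card_pos.1 (by rw [hμ.card_eq hA]; exact k.succ_pos)

-- The weights `ν` accumulate the links of the vertices found in `X`; every such vertex adds at
-- least `1 / (4 * q * N)` to their sum, and if no heavy vertex is in `X`, they are all excluded.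
theorem hasFingerprint_excludes_of_accumulated {ℓ t : ℝ} (hK : 0 < K) (hN : 0 < N) (hq : 0 < q)
    (hΩ : (Fintype.card Ω : ℝ) ≤ N) (hμ : IsSpread (k + 1) K q N μ) (hμ1 : 1 ≤ ∑ A, μ A)
    (hℓ : 0 ≤ ℓ) (ht : t ≤ N / (4 * K))
    (ih : ∀ ν : Finset Ω → ℝ, IsSpread k (2 ^ (k + 1) * K + K) q N ν → 1 ≤ ∑ B, ν B →
      HasFingerprint ℓ fun X D => IsIndep ν X → Excludes ν t X D)
    (j : ℕ) (hν : IsSpread k (2 ^ (k + 1) * K + K) q N ν)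
    (hνμ : ∀ B, ν B ≠ 0 → ∃ v, μ (insert v B) ≠ 0) (hνj : 1 ≤ ∑ B, ν B + j / (4 * (q * N))) :
    HasFingerprint (j + ℓ) fun X D => IsIndep μ X → IsIndep ν X → Excludes μ t X D := by
  have hfull {ν : Finset Ω → ℝ} (j : ℕ) (hν : IsSpread k (2 ^ (k + 1) * K + K) q N ν)
      (hνμ : ∀ B, ν B ≠ 0 → ∃ v, μ (insert v B) ≠ 0) (hν1 : 1 ≤ ∑ B, ν B) :
      HasFingerprint (j + ℓ) fun X D => IsIndep μ X → IsIndep ν X → Excludes μ t X D :=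
    (ih ν hν hν1).mono (le_add_of_nonneg_left j.cast_nonneg) fun X D hD _ hX =>
      (hD hX).of_insert hνμ
  induction j generalizing ν with
  | zero => exact hfull 0 hν hνμ (by simpa using hνj)
  | succ j ihj =>
    rcases le_or_gt 1 (∑ B, ν B) with hν1 | hν1
    · exact hfull (j + 1) hν hνμ hν1
    set link := avoidingLink μ (saturated (2 ^ (k + 1) * K) q N ν)
    set heavy : Finset Ω := {v | 1 / (4 * N) ≤ ∑ B, link v B}
    have hlink {v : Ω} (hv : v ∈ heavy) : 1 / (4 * N) ≤ ∑ B, link v B := (mem_filter.1 hv).2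
    have hnext (v : Ω) (hv : v ∈ heavy) := ihj (hμ.add_avoidingLink hν hK hN hq v)
      (fun B hB => (ne_zero_or_of_add_avoidingLink_ne_zero hB).elim (hνμ B) fun h => ⟨v, h.2⟩) (by
        have hgain : 1 / (4 * (q * N)) ≤ (∑ B, link v B) / q := by
          rw [le_div_iff₀ hq]
          exact (hlink hv).trans' (le_of_eq (by field_simp))
        rw [sum_add_distrib, ← sum_div]
        rw [Nat.cast_succ, add_div] at hνj
        linarith)
    refine (HasFingerprint.query (by positivity) heavy heavy hnext).mono
      (by rw [Nat.cast_succ]; linarith) fun X D hD hμX hνX => ?_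
    rcases hD with ⟨v, -, hvX, hD⟩ | ⟨hdisj, rfl⟩
    · exact hD hμX (hμX.add_avoidingLink hνX hvX)
    · refine ⟨hdisj, ht.trans (hμ.le_card_heavy hν hK hN hΩ hμ1 hν1.le), fun {v} hv => ?_⟩
      have hpos : 0 < ∑ B, link v B := (by positivity : 0 < 1 / (4 * N)).trans_le (hlink hv)
      obtain ⟨B, -, hB⟩ := exists_ne_zero_of_sum_ne_zero hpos.ne'
      exact ⟨insert v B, (avoidingLink_ne_zero hB).2, mem_insert_self v B⟩

theorem exists_hasFingerprint_excludes (k : ℕ) {K : ℝ} (hK : 0 < K) :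
    ∃ δ > 0, ∃ L > 0, ∀ (Ω : Type*) [Fintype Ω] (N q : ℝ) (μ : Finset Ω → ℝ), 0 < N → 0 < q →
      (Fintype.card Ω : ℝ) ≤ N → IsSpread k K q N μ → 1 ≤ ∑ A, μ A →
      HasFingerprint (L * (q * N + 1)) fun X D => IsIndep μ X → Excludes μ (δ * N) X D := by
  induction k generalizing K with
  | zero =>
    refine ⟨1, one_pos, 1, one_pos, fun Ω _ N q μ hN hq _ hμ hμ1 => ?_⟩
    refine .const (by positivity) ∅ fun X hX => ?_
    obtain ⟨A, -, hA⟩ := exists_ne_zero_of_sum_ne_zero (zero_lt_one.trans_le hμ1).ne'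
    exact absurd (card_eq_zero.1 (hμ.card_eq hA) ▸ empty_subset X) (hX A hA)
  | succ k ih =>
    obtain ⟨δ, hδ, L, hL, hstep⟩ := ih (K := 2 ^ (k + 1) * K + K) (by positivity)
    refine ⟨min δ (1 / (4 * K)), by positivity, 4 + L, by positivity,
      fun Ω _ N q μ hN hq hΩ hμ hμ1 => ?_⟩
    have hzero : IsSpread k (2 ^ (k + 1) * K + K) q N (fun _ : Finset Ω => 0) :=
      ⟨fun _ => le_rfl, fun h => absurd rfl h, fun _ => by
        simp only [codeg, sum_const_zero]
        positivity⟩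
    have hδ_le : min δ (1 / (4 * K)) * N ≤ δ * N := by gcongr; exact min_le_left _ _
    have hfinger := hasFingerprint_excludes_of_accumulated (ℓ := L * (q * N + 1))
      (t := min δ (1 / (4 * K)) * N) hK hN hq hΩ hμ hμ1 (by positivity)
      ((mul_le_mul_of_nonneg_right (min_le_right _ _) hN.le).trans_eq (by ring))
      (fun ν hν hν1 => (hstep Ω N q ν hN hq hΩ hν hν1).mono le_rfl fun X D hD hX =>
        ⟨(hD hX).disjoint, hδ_le.trans (hD hX).le_card, (hD hX).covered⟩)
      ⌈4 * (q * N)⌉₊ hzero (fun _ h => absurd rfl h) (by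
        rw [sum_const_zero, zero_add, one_le_div (by positivity)]
        exact Nat.le_ceil _)
    refine hfinger.mono ?_ fun X D hD hX => hD hX fun _ h => absurd rfl h
    have := Nat.ceil_lt_add_one (a := 4 * (q * N)) (by positivity)
    nlinarith

end ContainerStep

section Containers

variable {Ω : Type*} [Fintype Ω] {k : ℕ} {K q N γ : ℝ} {w : Finset Ω → ℝ}

theorem IsSpread.restrict_div (hw : IsSpread k K q N w) (hγ : 0 < γ) (U : Finset Ω) :
    IsSpread k (K / γ) q N fun A => (if A ⊆ U then w A else 0) / γ where
  nonneg A := by have := hw.nonneg A; split_ifs <;> positivity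
  card_eq {A} hA := hw.card_eq fun h => hA (by simp [h])
  codeg_le {S} hS := by
    calc codeg (fun A => (if A ⊆ U then w A else 0) / γ) S ≤ codeg w S / γ := by
          rw [codeg, codeg, ← sum_div]
          gcongr with A
          split_ifs
          exacts [le_rfl, hw.nonneg A]
      _ ≤ K * q ^ (#S - 1) / N / γ := by gcongr; exact hw.codeg_le hS
      _ = K / γ * q ^ (#S - 1) / N := by ring

theorem hasFingerprint_container_of_excludes {ℓ t : ℝ} (hℓ : 0 ≤ ℓ) (hγ : 0 < γ)
    (hw : IsSpread k K q N w)
    (hstep : ∀ μ : Finset Ω → ℝ, IsSpread k (K / γ) q N μ → 1 ≤ ∑ A, μ A →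
      HasFingerprint ℓ fun X D => IsIndep μ X → Excludes μ t X D)
    (j : ℕ) (U : Finset Ω) (hU : #U ≤ j * t) :
    HasFingerprint (j * ℓ) fun X D =>
      IsIndep w X → X ⊆ U → X ⊆ D ∧ ∑ A ∈ D.powerset, w A < γ := by
  induction j generalizing U with
  | zero =>
    have hU0 : U = ∅ := card_eq_zero.1 (mod_cast le_antisymm (by simpa using hU) (by positivity))
    refine .const (by simp) ∅ fun X hX hXU => ⟨hU0 ▸ hXU, ?_⟩
    rw [powerset_empty, sum_singleton]
    by_cases h : w ∅ = 0
    · rwa [h]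
    · exact absurd (empty_subset X) (hX ∅ h)
  | succ j ih =>
    by_cases hsmall : ∑ A ∈ U.powerset, w A < γ
    · exact .const (by positivity) U fun X _ hXU => ⟨hXU, hsmall⟩
    set μ : Finset Ω → ℝ := fun A => (if A ⊆ U then w A else 0) / γ
    have hμ_ne {A : Finset Ω} (hA : μ A ≠ 0) : A ⊆ U ∧ w A ≠ 0 := by
      simpa [μ, hγ.ne'] using hA
    have hμ1 : 1 ≤ ∑ A, μ A := by
      rw [← sum_div, ← sum_filter, filter_subset_univ, one_le_div hγ]
      exact not_lt.1 hsmall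
    have hrest (D : Finset Ω) : HasFingerprint (j * ℓ) fun X D' =>
        D ⊆ U → t ≤ #D → IsIndep w X → X ⊆ U \ D → X ⊆ D' ∧ ∑ A ∈ D'.powerset, w A < γ := by
      by_cases hD : D ⊆ U ∧ t ≤ #D
      · refine (ih (U \ D) ?_).mono le_rfl fun X D' h _ _ => h
        rw [cast_card_sdiff hD.1]
        push_cast at hU
        linarith
      · exact .const (by positivity) ∅ fun X h₁ h₂ => absurd ⟨h₁, h₂⟩ hD
    refine ((hstep μ (hw.restrict_div hγ U) hμ1).bind hrest).mono
      (by push_cast; linarith) ?_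
    rintro X D' ⟨D, hD, hD'⟩ hX hXU
    have hexcl := hD fun A hA => hX A (hμ_ne hA).2
    refine hD' (fun v hv => ?_) hexcl.le_card hX (subset_sdiff.2 ⟨hXU, hexcl.disjoint.symm⟩)
    obtain ⟨A, hA, hvA⟩ := hexcl.covered hv
    exact (hμ_ne hA).1 hvA

theorem exists_hasFingerprint_container (k : ℕ) (hK : 0 < K) (hγ : 0 < γ) :
    ∃ L > 0, ∀ (Ω : Type*) [Fintype Ω] (N q : ℝ) (w : Finset Ω → ℝ), 0 < N → 0 < q →
      (Fintype.card Ω : ℝ) ≤ N → IsSpread k K q N w →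
      HasFingerprint (L * (q * N + 1)) fun X D =>
        IsIndep w X → X ⊆ D ∧ ∑ A ∈ D.powerset, w A < γ := by
  obtain ⟨δ, hδ, L, hL, hstep⟩ := exists_hasFingerprint_excludes k (div_pos hK hγ)
  refine ⟨⌈1 / δ⌉₊ * L, by positivity, fun Ω _ N q w hN hq hΩ hw => ?_⟩
  have hcover : (#(univ : Finset Ω) : ℝ) ≤ ⌈1 / δ⌉₊ * (δ * N) := by
    calc (#(univ : Finset Ω) : ℝ) ≤ 1 / δ * (δ * N) := by
          rw [card_univ, ← mul_assoc, one_div_mul_cancel hδ.ne', one_mul]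
          exact hΩ
      _ ≤ ⌈1 / δ⌉₊ * (δ * N) := by gcongr; exact Nat.le_ceil _
  refine (hasFingerprint_container_of_excludes (ℓ := L * (q * N + 1)) (by positivity) hγ hw
    (fun μ hμ hμ1 => hstep Ω N q μ hN hq hΩ hμ hμ1) ⌈1 / δ⌉₊ univ hcover).mono
    (mul_assoc _ _ _).ge fun X D hD hX => hD hX (subset_univ X)

end Containers

section BlockAverage

open scoped BigOperators

variable {Z κ κ' : Type*} [Fintype Z]

/-- The average of `f` over the colour class `k` of the colouring `C`
(`0` if the class is empty). -/
noncomputable def blockAvg (C : Z → κ) (f : Z → ℝ) (k : κ) : ℝ := 𝔼 z with C z = k, f z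

/-- The energy of the colouring `C` with respect to `f`, that is, the sum over all points of the
squared average of `f` over the colour class of the point. -/
noncomputable def blockEnergy (C : Z → κ) (f : Z → ℝ) : ℝ := ∑ z, blockAvg C f (C z) ^ 2

theorem sum_blockAvg_mul (C : Z → κ) (f : Z → ℝ) (φ : κ → ℝ) :
    ∑ z, blockAvg C f (C z) * φ (C z) = ∑ z, f z * φ (C z) := by
  have hmaps : ∀ z ∈ univ, C z ∈ univ.image C := fun z => mem_image_of_mem C
  rw [← sum_fiberwise_of_maps_to hmaps fun z => blockAvg C f (C z) * φ (C z),
    ← sum_fiberwise_of_maps_to hmaps fun z => f z * φ (C z)]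
  refine sum_congr rfl fun k _ => ?_
  calc ∑ z with C z = k, blockAvg C f (C z) * φ (C z)
      = ∑ z with C z = k, blockAvg C f k * φ k :=
        sum_congr rfl fun z hz => by rw [(mem_filter.1 hz).2]
    _ = (∑ z with C z = k, f z) * φ k := by
        rw [sum_const, ← smul_mul_assoc, blockAvg, card_smul_expect]
    _ = ∑ z with C z = k, f z * φ (C z) := by
        rw [sum_mul]
        exact sum_congr rfl fun z hz => by rw [(mem_filter.1 hz).2]

theorem blockAvg_mem_Icc (C : Z → κ) {f : Z → ℝ} (hf : ∀ z, f z ∈ Set.Icc (0 : ℝ) 1) (k : κ) :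
    blockAvg C f k ∈ Set.Icc (0 : ℝ) 1 := by
  refine ⟨expect_nonneg fun z _ => (hf z).1, ?_⟩
  rcases ({z | C z = k} : Finset Z).eq_empty_or_nonempty with h | h
  · rw [blockAvg, h, expect_empty]
    exact zero_le_one
  · exact expect_le h fun z _ => (hf z).2

theorem blockEnergy_sub_blockEnergy (C' : Z → κ') (π : κ' → κ) (f : Z → ℝ) :
    blockEnergy C' f - blockEnergy (π ∘ C') f =
      ∑ z, (blockAvg (π ∘ C') f (π (C' z)) - blockAvg C' f (C' z)) ^ 2 := by
  have hcross : ∑ z, blockAvg C' f (C' z) * blockAvg (π ∘ C') f (π (C' z)) =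
      blockEnergy (π ∘ C') f := by
    rw [sum_blockAvg_mul C' f fun k => blockAvg (π ∘ C') f (π k)]
    simpa only [blockEnergy, sq, Function.comp_apply] using
      (sum_blockAvg_mul (π ∘ C') f (blockAvg (π ∘ C') f)).symm
  simp only [sub_sq', sum_sub_distrib, sum_add_distrib, mul_assoc, ← mul_sum]
  simp only [mul_comm (blockAvg (π ∘ C') f _), hcross, blockEnergy, Function.comp_apply]
  ring

theorem sq_sum_blockAvg_sub_mul_le (C' : Z → κ') (π : κ' → κ) (f : Z → ℝ) {φ : κ' → ℝ}
    (hφ : ∀ k, φ k ^ 2 ≤ 1) :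
    (∑ z, (blockAvg (π ∘ C') f (π (C' z)) - f z) * φ (C' z)) ^ 2 ≤
      Fintype.card Z * (blockEnergy C' f - blockEnergy (π ∘ C') f) := by
  have hproj : ∑ z, (blockAvg (π ∘ C') f (π (C' z)) - f z) * φ (C' z) =
      ∑ z, (blockAvg (π ∘ C') f (π (C' z)) - blockAvg C' f (C' z)) * φ (C' z) := by
    simp only [sub_mul, sum_sub_distrib, sum_blockAvg_mul]
  have hφ_sum : ∑ z, φ (C' z) ^ 2 ≤ Fintype.card Z := by
    simpa using sum_le_card_nsmul univ _ 1 fun z _ => hφ (C' z)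
  rw [hproj, blockEnergy_sub_blockEnergy, mul_comm]
  exact (sum_mul_sq_le_sq_mul_sq _ _ _).trans (by gcongr)

end BlockAverage

section WeakRegularity

variable {α β κ : Type*}

theorem sum_mul_le_sum_pos [Fintype α] (u : α → ℝ) {a : α → ℝ}
    (ha : ∀ x, a x ∈ Set.Icc (0 : ℝ) 1) : ∑ x, a x * u x ≤ ∑ x with 0 < u x, u x := by
  rw [sum_filter]
  refine sum_le_sum fun x _ => ?_
  split_ifs with h
  · exact mul_le_of_le_one_left h.le (ha x).2
  · exact mul_nonpos_of_nonneg_of_nonpos (ha x).1 (not_lt.1 h)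

/-- The one-sided cut norm of `D` is at most `r`: no rectangle has `D`-sum larger than `r`. -/
def CutLE (D : α × β → ℝ) (r : ℝ) : Prop := ∀ W₁ W₂, ∑ z ∈ W₁ ×ˢ W₂, D z ≤ r

theorem CutLE.sum_mul_mul_le [Fintype α] [Fintype β] {D : α × β → ℝ} {r : ℝ} (hD : CutLE D r)
    {a : α → ℝ} {b : β → ℝ} (ha : ∀ x, a x ∈ Set.Icc (0 : ℝ) 1)
    (hb : ∀ y, b y ∈ Set.Icc (0 : ℝ) 1) : ∑ x, ∑ y, a x * b y * D (x, y) ≤ r := by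
  set W₁ : Finset α := {x | 0 < ∑ y, b y * D (x, y)}
  set W₂ : Finset β := {y | 0 < ∑ x ∈ W₁, D (x, y)}
  calc ∑ x, ∑ y, a x * b y * D (x, y) = ∑ x, a x * ∑ y, b y * D (x, y) := by
        simp only [mul_assoc, mul_sum]
    _ ≤ ∑ x ∈ W₁, ∑ y, b y * D (x, y) := sum_mul_le_sum_pos _ ha
    _ = ∑ y, b y * ∑ x ∈ W₁, D (x, y) := by
        rw [sum_comm]
        simp only [mul_sum]
    _ ≤ ∑ y ∈ W₂, ∑ x ∈ W₁, D (x, y) := sum_mul_le_sum_pos _ hb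
    _ = ∑ z ∈ W₁ ×ˢ W₂, D z := (sum_product_right _ _ _).symm
    _ ≤ r := hD W₁ W₂

/-- The refinement of the colouring `c` by membership in `W₁` and in `W₂`. -/
def splitBy (c : α → κ) (W₁ W₂ : Finset α) (x : α) : κ × Prop × Prop := (c x, x ∈ W₁, x ∈ W₂)

variable [Fintype α]

theorem blockEnergy_le_splitBy (c : α → κ) (W₁ W₂ : Finset α) (f : α × α → ℝ) :
    blockEnergy (Prod.map c c) f ≤
      blockEnergy (Prod.map (splitBy c W₁ W₂) (splitBy c W₁ W₂)) f := by
  refine sub_nonneg.1 (le_of_le_of_eq (sum_nonneg fun z _ => sq_nonneg _)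
    (blockEnergy_sub_blockEnergy _ (Prod.map Prod.fst Prod.fst) f).symm)

theorem blockEnergy_add_lt_splitBy {ε : ℝ} (hε : 0 ≤ ε) {c : α → κ} {W₁ W₂ : Finset α}
    {f : α × α → ℝ} (hW : ε * (Fintype.card α : ℝ) ^ 2 <
      ∑ z ∈ W₁ ×ˢ W₂, (blockAvg (Prod.map c c) f (Prod.map c c z) - f z)) :
    blockEnergy (Prod.map c c) f + ε ^ 2 * (Fintype.card α : ℝ) ^ 2 <
      blockEnergy (Prod.map (splitBy c W₁ W₂) (splitBy c W₁ W₂)) f := by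
  have hrect : ∑ z ∈ W₁ ×ˢ W₂, (blockAvg (Prod.map c c) f (Prod.map c c z) - f z) =
      ∑ z : α × α, (blockAvg (Prod.map c c) f (Prod.map c c z) - f z) *
        if z.1 ∈ W₁ ∧ z.2 ∈ W₂ then 1 else 0 := by
    simp only [mul_ite, mul_one, mul_zero, ← sum_filter]
    congr 1
    ext z
    simp
  have hincr : (∑ z ∈ W₁ ×ˢ W₂, (blockAvg (Prod.map c c) f (Prod.map c c z) - f z)) ^ 2 ≤
      (Fintype.card α : ℝ) ^ 2 * (blockEnergy (Prod.map (splitBy c W₁ W₂) (splitBy c W₁ W₂)) f -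
        blockEnergy (Prod.map c c) f) := by
    rw [hrect, sq (Fintype.card α : ℝ), ← Nat.cast_mul, ← Fintype.card_prod]
    convert sq_sum_blockAvg_sub_mul_le (Prod.map (splitBy c W₁ W₂) (splitBy c W₁ W₂))
      (Prod.map Prod.fst Prod.fst) f (φ := fun k => if k.1.2.1 ∧ k.2.2.2 then 1 else 0)
      (fun k => by split_ifs <;> norm_num) using 4
    · rfl
    · congr!
    · rfl
  refine lt_sub_iff_add_lt'.1 (lt_of_mul_lt_mul_left ?_ (sq_nonneg (Fintype.card α : ℝ)))
  calc (Fintype.card α : ℝ) ^ 2 * (ε ^ 2 * (Fintype.card α : ℝ) ^ 2)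
      = (ε * (Fintype.card α : ℝ) ^ 2) ^ 2 := by ring
    _ < _ := pow_lt_pow_left₀ hW (by positivity) two_ne_zero
    _ ≤ _ := hincr

variable {E : Type*} [Fintype E] {f : E → α × α → ℝ}

theorem sum_blockEnergy_le (hf : ∀ e z, f e z ∈ Set.Icc (0 : ℝ) 1) (c : α → κ) :
    ∑ e, blockEnergy (Prod.map c c) (f e) ≤ Fintype.card E * (Fintype.card α : ℝ) ^ 2 := by
  have hterm (e : E) : blockEnergy (Prod.map c c) (f e) ≤ (Fintype.card α : ℝ) ^ 2 := by
    have hz (z : α × α) : blockAvg (Prod.map c c) (f e) (Prod.map c c z) ^ 2 ≤ 1 :=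
      pow_le_one₀ (blockAvg_mem_Icc _ (hf e) _).1 (blockAvg_mem_Icc _ (hf e) _).2
    simpa [sq, blockEnergy] using sum_le_card_nsmul univ _ _ fun z _ => hz z
  simpa using sum_le_card_nsmul univ _ _ fun e _ => hterm e

theorem exists_sum_blockEnergy_add_lt_splitBy {ε : ℝ} (hε : 0 ≤ ε) {c : α → κ}
    (hc : ¬∀ e, CutLE (fun z => blockAvg (Prod.map c c) (f e) (Prod.map c c z) - f e z)
      (ε * (Fintype.card α : ℝ) ^ 2)) :
    ∃ W₁ W₂, ∑ e, blockEnergy (Prod.map c c) (f e) + ε ^ 2 * (Fintype.card α : ℝ) ^ 2 <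
      ∑ e, blockEnergy (Prod.map (splitBy c W₁ W₂) (splitBy c W₁ W₂)) (f e) := by
  simp only [CutLE, not_forall, not_le] at hc
  obtain ⟨e, W₁, W₂, hW⟩ := hc
  refine ⟨W₁, W₂, ?_⟩
  rw [← add_sum_erase _ _ (mem_univ e), ← add_sum_erase univ (fun e => blockEnergy _ (f e))
    (mem_univ e), add_right_comm]
  exact add_lt_add_of_lt_of_le (blockEnergy_add_lt_splitBy hε hW)
    (sum_le_sum fun e' _ => blockEnergy_le_splitBy c W₁ W₂ (f e'))

theorem exists_cutLE_of_le_sum_blockEnergy {ε : ℝ} (hε : 0 ≤ ε)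
    (hf : ∀ e z, f e z ∈ Set.Icc (0 : ℝ) 1) (j : ℕ) {κ : Type} [Fintype κ] (c : α → κ)
    (hc : Fintype.card E * (Fintype.card α : ℝ) ^ 2 ≤
      ∑ e, blockEnergy (Prod.map c c) (f e) + j * (ε ^ 2 * (Fintype.card α : ℝ) ^ 2)) :
    ∃ (κ' : Type) (_ : Fintype κ') (c' : α → κ'),
      Fintype.card κ' ≤ 4 ^ j * Fintype.card κ ∧
      ∀ e, CutLE (fun z => blockAvg (Prod.map c' c') (f e) (Prod.map c' c' z) - f e z)
        (ε * (Fintype.card α : ℝ) ^ 2) := by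
  induction j generalizing κ with
  | zero =>
    refine ⟨κ, inferInstance, c, by simp, by_contra fun hcut => ?_⟩
    obtain ⟨W₁, W₂, hgain⟩ := exists_sum_blockEnergy_add_lt_splitBy hε hcut
    rw [Nat.cast_zero, zero_mul, add_zero] at hc
    linarith [sum_blockEnergy_le hf (splitBy c W₁ W₂),
      show 0 ≤ ε ^ 2 * (Fintype.card α : ℝ) ^ 2 by positivity]
  | succ j ih =>
    by_cases hcut : ∀ e, CutLE (fun z => blockAvg (Prod.map c c) (f e) (Prod.map c c z) - f e z)
      (ε * (Fintype.card α : ℝ) ^ 2)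
    · exact ⟨κ, inferInstance, c, Nat.le_mul_of_pos_left _ (by positivity), hcut⟩
    obtain ⟨W₁, W₂, hgain⟩ := exists_sum_blockEnergy_add_lt_splitBy hε hcut
    obtain ⟨κ', hκ', c', hcard, hcut'⟩ := ih (splitBy c W₁ W₂) (by push_cast at hc; linarith)
    refine ⟨κ', hκ', c', hcard.trans_eq ?_, hcut'⟩
    rw [Fintype.card_prod, Fintype.card_prod, Fintype.card_prop]
    ring

theorem exists_weakly_regular_colouring {ε : ℝ} (hε : 0 < ε)
    (hf : ∀ e z, f e z ∈ Set.Icc (0 : ℝ) 1) :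
    ∃ (κ : Type) (_ : Fintype κ) (c : α → κ),
      Fintype.card κ ≤ 4 ^ ⌈Fintype.card E / ε ^ 2⌉₊ ∧
      ∀ e, CutLE (fun z => blockAvg (Prod.map c c) (f e) (Prod.map c c z) - f e z)
        (ε * (Fintype.card α : ℝ) ^ 2) := by
  have hsteps : Fintype.card E * (Fintype.card α : ℝ) ^ 2 ≤
      ⌈Fintype.card E / ε ^ 2⌉₊ * (ε ^ 2 * (Fintype.card α : ℝ) ^ 2) := by
    rw [← mul_assoc]
    gcongr
    exact (div_le_iff₀ (by positivity)).1 (Nat.le_ceil _)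
  simpa using exists_cutLE_of_le_sum_blockEnergy hε.le hf _ (fun _ : α => ())
    (hsteps.trans (le_add_of_nonneg_left (sum_nonneg fun e _ => sum_nonneg fun z _ => sq_nonneg _)))

end WeakRegularity

section EdgeImage

variable {ι α : Type*} {H : SimpleGraph ι}

/-- The endpoints of an edge in an arbitrary but fixed order, orienting the edges of `H`. -/
noncomputable def ends (e : H.edgeSet) : ι × ι := Quot.out e.1

/-- The pair of images under `ψ` of the endpoints of the edge `e`. -/
noncomputable def edgeImage (ψ : ι → α) (e : H.edgeSet) : α × α := Prod.map ψ ψ (ends e)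

theorem mk_ends (e : H.edgeSet) : s((ends e).1, (ends e).2) = e := Quot.out_eq e.1

theorem adj_ends (e : H.edgeSet) : H.Adj (ends e).1 (ends e).2 :=
  H.mem_edgeSet.1 (mk_ends e ▸ e.2)

theorem mem_iff_eq_ends {e : H.edgeSet} {i : ι} :
    i ∈ (e : Sym2 ι) ↔ i = (ends e).1 ∨ i = (ends e).2 := by
  rw [← mk_ends e, Sym2.mem_iff]

theorem edgeImage_eq_edgeImage_iff {ψ φ : ι → α} {e : H.edgeSet} :
    edgeImage ψ e = edgeImage φ e ↔ ∀ i ∈ (e : Sym2 ι), ψ i = φ i := by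
  simp only [edgeImage, Prod.ext_iff, Prod.map_fst, Prod.map_snd, mem_iff_eq_ends, forall_eq_or_imp,
    forall_eq]

theorem edgeImage_update_of_notMem (ψ : ι → α) {i : ι} {e : H.edgeSet} (hi : i ∉ (e : Sym2 ι))
    (x : α) : edgeImage (Function.update ψ i x) e = edgeImage ψ e :=
  edgeImage_eq_edgeImage_iff.2 fun _ hj => Function.update_of_ne (ne_of_mem_of_not_mem hj hi) x ψ

theorem edgeImage_update_ends (ψ : ι → α) (e : H.edgeSet) (x y : α) :
    edgeImage (Function.update (Function.update ψ (ends e).1 x) (ends e).2 y) e = (x, y) := by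
  simp [edgeImage, Prod.map, Function.update_of_ne (adj_ends e).ne]

theorem notMem_of_ne {e f : H.edgeSet} (hfe : f ≠ e) (hf : (ends e).2 ∈ (f : Sym2 ι)) :
    (ends e).1 ∉ (f : Sym2 ι) := fun hf' =>
  hfe (Subtype.ext (((Sym2.mem_and_mem_iff (adj_ends e).ne).1 ⟨hf', hf⟩).trans (mk_ends e)))

variable [Fintype ι] [Fintype α]

theorem sum_sum_update (i : ι) (Φ : (ι → α) → ℝ) :
    ∑ ψ, ∑ x, Φ (Function.update ψ i x) = Fintype.card α * ∑ ψ, Φ ψ := by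
  calc ∑ ψ, ∑ x, Φ (Function.update ψ i x)
      = ∑ p : (ι → α) × α, Φ (Function.update p.1 i p.2) := by
        rw [Fintype.sum_prod_type]
    _ = ∑ p : (ι → α) × α, Φ p.1 := by
        refine sum_bij' (fun p _ => (Function.update p.1 i p.2, p.1 i))
          (fun p _ => (Function.update p.1 i p.2, p.1 i)) ?_ ?_ ?_ ?_ ?_ <;> simp
    _ = Fintype.card α * ∑ ψ, Φ ψ := by
        rw [Fintype.sum_prod_type]
        simp [mul_sum]

theorem sum_sum_update_ends (e : H.edgeSet) (Φ : (ι → α) → ℝ) :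
    ∑ ψ, ∑ x, ∑ y, Φ (Function.update (Function.update ψ (ends e).1 x) (ends e).2 y) =
      (Fintype.card α : ℝ) ^ 2 * ∑ ψ, Φ ψ := by
  rw [sum_sum_update (ends e).1 fun ψ => ∑ y, Φ (Function.update ψ (ends e).2 y),
    sum_sum_update, sq, mul_assoc]

theorem sq_card_mul_card_edgeImage (e : H.edgeSet) (P : α × α → Prop) :
    (Fintype.card α : ℝ) ^ 2 * #{ψ : ι → α | P (edgeImage ψ e)} =
      (Fintype.card α : ℝ) ^ Fintype.card ι * #{z | P z} := by
  have h := sum_sum_update_ends e fun ψ : ι → α => if P (edgeImage ψ e) then (1 : ℝ) else 0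
  simp only [edgeImage_update_ends, sum_const, card_univ, Fintype.card_fun, nsmul_eq_mul,
    Nat.cast_pow] at h
  rw [← Fintype.sum_prod_type' fun x y => if P (x, y) then (1 : ℝ) else 0, sum_boole,
    sum_boole] at h
  exact h.symm

end EdgeImage

section CountingLemma

variable {ι α : Type*} {H : SimpleGraph ι}

theorem prod_mem_Icc {M : H.edgeSet → α × α → ℝ} (hM : ∀ f z, M f z ∈ Set.Icc (0 : ℝ) 1)
    (s : Finset H.edgeSet) (ψ : ι → α) :
    ∏ f ∈ s, M f (edgeImage ψ f) ∈ Set.Icc (0 : ℝ) 1 :=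
  ⟨prod_nonneg fun f _ => (hM f _).1, prod_le_one (fun f _ => (hM f _).1) fun f _ => (hM f _).2⟩

variable [Fintype ι] [Fintype α]

/- Once all other vertices are embedded, no edge but `e` sees both endpoints of `e`, so the product
over these edges splits into a factor for each endpoint. -/
theorem CutLE.sum_mul_prod_erase_le {D : α × α → ℝ} {r : ℝ} (hD : CutLE D r)
    {M : H.edgeSet → α × α → ℝ} (hM : ∀ f z, M f z ∈ Set.Icc (0 : ℝ) 1) (e : H.edgeSet) :
    (Fintype.card α : ℝ) ^ 2 *
      ∑ ψ : ι → α, D (edgeImage ψ e) * ∏ f ∈ univ.erase e, M f (edgeImage ψ f) ≤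
      (Fintype.card α : ℝ) ^ Fintype.card ι * r := by
  rw [← sum_sum_update_ends e]
  have hfixed (ψ : ι → α) : ∑ x, ∑ y,
      D (edgeImage (Function.update (Function.update ψ (ends e).1 x) (ends e).2 y) e) *
        ∏ f ∈ univ.erase e,
          M f (edgeImage (Function.update (Function.update ψ (ends e).1 x) (ends e).2 y) f) ≤
      r := by
    refine le_of_eq_of_le (sum_congr rfl fun x _ => sum_congr rfl fun y _ => ?_)
      (hD.sum_mul_mul_le
        (fun x => prod_mem_Icc hM ({f ∈ univ.erase e | (ends e).2 ∉ (f : Sym2 ι)})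
          (Function.update ψ (ends e).1 x))
        (fun y => prod_mem_Icc hM ({f ∈ univ.erase e | ¬(ends e).2 ∉ (f : Sym2 ι)})
          (Function.update ψ (ends e).2 y)))
    rw [edgeImage_update_ends, mul_comm,
      ← prod_filter_mul_prod_filter_not (univ.erase e) fun f => (ends e).2 ∉ (f : Sym2 ι)]
    congr 2 <;> refine prod_congr rfl fun f hf => ?_
    · rw [edgeImage_update_of_notMem _ (mem_filter.1 hf).2]
    · obtain ⟨hfe, hf⟩ := mem_filter.1 hf
      rw [Function.update_comm (adj_ends e).ne,
        edgeImage_update_of_notMem _ (notMem_of_ne (mem_erase.1 hfe).1 (not_not.1 hf))]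
  calc _ ≤ ∑ _ψ : ι → α, r := sum_le_sum fun ψ _ => hfixed ψ
    _ = (Fintype.card α : ℝ) ^ Fintype.card ι * r := by simp

theorem sum_prod_sub_sum_prod (F G : H.edgeSet → α × α → ℝ) {e : H.edgeSet}
    {s : Finset H.edgeSet} (he : e ∉ s) :
    ∑ ψ : ι → α, ∏ f, s.piecewise F G f (edgeImage ψ f) -
      ∑ ψ : ι → α, ∏ f, (insert e s).piecewise F G f (edgeImage ψ f) =
      ∑ ψ : ι → α, (G e (edgeImage ψ e) - F e (edgeImage ψ e)) *
        ∏ f ∈ univ.erase e, s.piecewise F G f (edgeImage ψ f) := by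
  rw [← sum_sub_distrib]
  refine sum_congr rfl fun ψ _ => ?_
  have herase : ∏ f ∈ univ.erase e, (insert e s).piecewise F G f (edgeImage ψ f) =
      ∏ f ∈ univ.erase e, s.piecewise F G f (edgeImage ψ f) :=
    prod_congr rfl fun f hf => by simp only [piecewise, mem_insert, (mem_erase.1 hf).1, false_or]
  rw [← mul_prod_erase univ _ (mem_univ e), ← mul_prod_erase univ _ (mem_univ e), herase,
    piecewise_eq_of_notMem _ _ _ he, piecewise_insert_self, sub_mul]

theorem sum_prod_le_sum_prod_add {F G : H.edgeSet → α × α → ℝ} {r : ℝ}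
    (hGF : ∀ e, CutLE (fun z => G e z - F e z) r)
    (hF : ∀ e z, F e z ∈ Set.Icc (0 : ℝ) 1) (hG : ∀ e z, G e z ∈ Set.Icc (0 : ℝ) 1) :
    (Fintype.card α : ℝ) ^ 2 * ∑ ψ : ι → α, ∏ e, G e (edgeImage ψ e) ≤
      (Fintype.card α : ℝ) ^ 2 * ∑ ψ : ι → α, ∏ e, F e (edgeImage ψ e) +
        Fintype.card H.edgeSet * ((Fintype.card α : ℝ) ^ Fintype.card ι * r) := by
  have hswap (s : Finset H.edgeSet) :
      (Fintype.card α : ℝ) ^ 2 * ∑ ψ : ι → α, ∏ e, G e (edgeImage ψ e) ≤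
        (Fintype.card α : ℝ) ^ 2 * ∑ ψ : ι → α, ∏ e, s.piecewise F G e (edgeImage ψ e) +
          #s * ((Fintype.card α : ℝ) ^ Fintype.card ι * r) := by
    induction s using Finset.induction_on with
    | empty => simp
    | insert e s hes ih =>
      have hmem (f : H.edgeSet) (z : α × α) : s.piecewise F G f z ∈ Set.Icc (0 : ℝ) 1 := by
        by_cases hf : f ∈ s
        · rw [piecewise_eq_of_mem _ _ _ hf]
          exact hF f z
        · rw [piecewise_eq_of_notMem _ _ _ hf]
          exact hG f z
      have hstep := (hGF e).sum_mul_prod_erase_le hmem e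
      rw [← sum_prod_sub_sum_prod F G hes] at hstep
      rw [card_insert_of_notMem hes, Nat.cast_succ]
      linarith
  simpa using hswap univ

end CountingLemma

section SparseBlocks

variable {ι α : Type*} [Fintype ι] [Fintype α] {H : SimpleGraph ι}

/-- `Z` is a union of products of colour classes of some colouring of `α` with at most `Q`
colours. -/
def IsBlockUnion (Q : ℕ) (Z : Finset (α × α)) : Prop :=
  ∃ (κ : Type) (_ : Fintype κ) (c : α → κ) (P : Set (κ × κ)),
    Fintype.card κ ≤ Q ∧ ∀ z, z ∈ Z ↔ Prod.map c c z ∈ P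

/-- The relation `X` has density at least `d` on every product of two sets of size at least `t`:
the part of the regularity of `X` that is needed to find many elements of `X` in a union of
blocks. -/
def IsLowerRegular (t d : ℝ) (X : Finset (α × α)) : Prop :=
  ∀ A B : Finset α, t ≤ #A → t ≤ #B → d * (#A * #B) ≤ #(X ∩ A ×ˢ B)

theorem card_blockAvg_lt_le {Z κ : Type*} [Fintype Z] (c : Z → κ) (C : Finset Z) {δ : ℝ}
    (hδ : 0 ≤ δ) :
    (#{z ∈ C | blockAvg c (Set.indicator C 1) (c z) < δ} : ℝ) ≤ δ * Fintype.card Z := by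
  set φ : κ → ℝ := fun k => if blockAvg c (Set.indicator C 1) k < δ then 1 else 0
  calc (#{z ∈ C | blockAvg c (Set.indicator C 1) (c z) < δ} : ℝ)
      = ∑ z, Set.indicator (C : Set Z) (1 : Z → ℝ) z * φ (c z) := by
        simp only [φ, mul_ite, mul_one, mul_zero, Set.indicator_apply, mem_coe, Pi.one_apply,
          ← ite_and, sum_boole]
        congr 2
        ext z
        simp [and_comm]
    _ = ∑ z, blockAvg c (Set.indicator C 1) (c z) * φ (c z) := (sum_blockAvg_mul c _ φ).symm
    _ ≤ ∑ _z : Z, δ := by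
        refine sum_le_sum fun z _ => ?_
        simp only [φ, mul_ite, mul_one, mul_zero]
        split_ifs with hz
        exacts [hz.le, hδ]
    _ = δ * Fintype.card Z := by simp [mul_comm]

theorem card_exists_edgeImage_le [Nonempty α] {P : H.edgeSet → α × α → Prop} {ρ : ℝ}
    (hP : ∀ e, (#{z | P e z} : ℝ) ≤ ρ * (Fintype.card α : ℝ) ^ 2) :
    (#{ψ : ι → α | ∃ e, P e (edgeImage ψ e)} : ℝ) ≤
      Fintype.card H.edgeSet * (ρ * (Fintype.card α : ℝ) ^ Fintype.card ι) := by
  have hN : (0 : ℝ) < (Fintype.card α : ℝ) ^ 2 := by positivity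
  have hsingle (e : H.edgeSet) : (#{ψ : ι → α | P e (edgeImage ψ e)} : ℝ) ≤
      ρ * (Fintype.card α : ℝ) ^ Fintype.card ι := by
    refine le_of_mul_le_mul_left ?_ hN
    rw [sq_card_mul_card_edgeImage]
    exact (mul_le_mul_of_nonneg_left (hP e) (by positivity)).trans_eq (by ring)
  calc (#{ψ : ι → α | ∃ e, P e (edgeImage ψ e)} : ℝ)
      ≤ #(univ.biUnion fun e => ({ψ : ι → α | P e (edgeImage ψ e)} : Finset (ι → α))) := by
        gcongr
        intro ψ
        simp
    _ ≤ ∑ e, (#{ψ : ι → α | P e (edgeImage ψ e)} : ℝ) := mod_cast card_biUnion_le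
    _ ≤ ∑ _e : H.edgeSet, ρ * (Fintype.card α : ℝ) ^ Fintype.card ι :=
        sum_le_sum fun e _ => hsingle e
    _ = _ := by simp

theorem le_sum_prod_of_card_lt_le [Nonempty α] [Nonempty H.edgeSet] {g : H.edgeSet → α × α → ℝ}
    {δ : ℝ} (hδ : 0 ≤ δ) (hg : ∀ e z, 0 ≤ g e z)
    (hlow : ∀ e, (#{z | g e z < δ} : ℝ) ≤
      1 / (2 * Fintype.card H.edgeSet) * (Fintype.card α : ℝ) ^ 2) :
    (Fintype.card α : ℝ) ^ Fintype.card ι / 2 * δ ^ Fintype.card H.edgeSet ≤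
      ∑ ψ : ι → α, ∏ e, g e (edgeImage ψ e) := by
  set bad : Finset (ι → α) := {ψ | ∃ e, g e (edgeImage ψ e) < δ}
  have hbad : (#bad : ℝ) ≤ (Fintype.card α : ℝ) ^ Fintype.card ι / 2 :=
    (card_exists_edgeImage_le hlow).trans_eq (by field_simp)
  have hgood : (Fintype.card α : ℝ) ^ Fintype.card ι / 2 ≤ #badᶜ := by
    rw [card_compl, Nat.cast_sub (card_le_univ _), Fintype.card_fun, Nat.cast_pow]
    linarith
  calc (Fintype.card α : ℝ) ^ Fintype.card ι / 2 * δ ^ Fintype.card H.edgeSet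
      ≤ #badᶜ * δ ^ Fintype.card H.edgeSet := by gcongr
    _ = ∑ _ψ ∈ badᶜ, ∏ _e : H.edgeSet, δ := by simp
    _ ≤ ∑ ψ ∈ badᶜ, ∏ e, g e (edgeImage ψ e) := by
        refine sum_le_sum fun ψ hψ => prod_le_prod (fun _ _ => hδ) fun e _ => ?_
        simp only [bad, mem_compl, mem_filter_univ, not_exists, not_lt] at hψ
        exact hψ e
    _ ≤ ∑ ψ : ι → α, ∏ e, g e (edgeImage ψ e) :=
        sum_le_sum_of_subset_of_nonneg (subset_univ _) fun ψ _ _ => prod_nonneg fun e _ => hg e _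

theorem sum_prod_indicator (C : H.edgeSet → Finset (α × α)) :
    ∑ ψ : ι → α, ∏ e, Set.indicator (C e : Set (α × α)) (1 : α × α → ℝ) (edgeImage ψ e) =
      #{ψ : ι → α | ∀ e, edgeImage ψ e ∈ C e} := by
  simp only [Set.indicator_apply, Pi.one_apply, prod_boole, sum_boole, mem_univ, true_imp_iff,
    mem_coe]

/- If few homomorphisms land in `C`, then so do few of the weighted homomorphisms into the block
averages of a weakly regular colouring, hence for some edge many blocks have low density. -/
theorem exists_isBlockUnion_of_card_lt (H : SimpleGraph ι) [Nonempty H.edgeSet] {δ : ℝ}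
    (hδ : 0 < δ) : ∃ Q > 0, ∀ (α : Type*) [Fintype α] [Nonempty α]
      (C : H.edgeSet → Finset (α × α)),
      (#{ψ : ι → α | ∀ e, edgeImage ψ e ∈ C e} : ℝ) <
        δ ^ Fintype.card H.edgeSet / 4 * (Fintype.card α : ℝ) ^ Fintype.card ι →
      ∃ e Z, IsBlockUnion Q Z ∧
        1 / (2 * Fintype.card H.edgeSet) * (Fintype.card α : ℝ) ^ 2 ≤ #Z ∧
        (#(C e ∩ Z) : ℝ) ≤ δ * (Fintype.card α : ℝ) ^ 2 := by
  set ε : ℝ := δ ^ Fintype.card H.edgeSet / (4 * Fintype.card H.edgeSet) with hε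
  have hε_pos : 0 < ε := by positivity
  refine ⟨4 ^ ⌈Fintype.card H.edgeSet / ε ^ 2⌉₊, by positivity, fun α _ _ C hC => ?_⟩
  set f : H.edgeSet → α × α → ℝ := fun e => Set.indicator (C e) 1
  have hf (e : H.edgeSet) (z : α × α) : f e z ∈ Set.Icc (0 : ℝ) 1 :=
    ⟨Set.indicator_nonneg (fun _ _ => zero_le_one) z,
      Set.indicator_le' (fun _ _ => le_rfl) (fun _ _ => zero_le_one) z⟩
  obtain ⟨κ, _, c, hκ, hcut⟩ := exists_weakly_regular_colouring hε_pos hf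
  set g : H.edgeSet → α × α → ℝ := fun e z => blockAvg (Prod.map c c) (f e) (Prod.map c c z)
  have hg (e : H.edgeSet) (z : α × α) : g e z ∈ Set.Icc (0 : ℝ) 1 := blockAvg_mem_Icc _ (hf e) _
  by_contra! hcon
  have hlow (e : H.edgeSet) : (#{z | g e z < δ} : ℝ) ≤
      1 / (2 * Fintype.card H.edgeSet) * (Fintype.card α : ℝ) ^ 2 := by
    by_contra! hlarge
    refine (hcon e _ ⟨κ, _, c, {k | blockAvg (Prod.map c c) (f e) k < δ}, hκ, fun z => ?_⟩
      hlarge.le).not_ge ?_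
    · rw [mem_filter_univ, Set.mem_ofPred_eq]
    · simpa [sq, inter_filter] using card_blockAvg_lt_le (Prod.map c c) (C e) hδ.le
  have hlower := le_sum_prod_of_card_lt_le hδ.le (fun e z => (hg e z).1) hlow
  have hcount : ∑ ψ : ι → α, ∏ e, g e (edgeImage ψ e) ≤
      #{ψ : ι → α | ∀ e, edgeImage ψ e ∈ C e} +
        Fintype.card H.edgeSet * (ε * (Fintype.card α : ℝ) ^ Fintype.card ι) := by
    refine le_of_mul_le_mul_left ((sum_prod_le_sum_prod_add hcut hf hg).trans_eq ?_)
      (show (0 : ℝ) < (Fintype.card α : ℝ) ^ 2 by positivity)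
    rw [sum_prod_indicator]
    ring
  have herr : Fintype.card H.edgeSet * (ε * (Fintype.card α : ℝ) ^ Fintype.card ι) =
      δ ^ Fintype.card H.edgeSet / 4 * (Fintype.card α : ℝ) ^ Fintype.card ι := by
    rw [hε]
    field_simp
  linarith

end SparseBlocks

section LowerRegular

variable {α κ : Type*}

theorem mul_card_mul_card_le_add {X : Finset (α × α)} {d t : ℝ} (hd : 0 ≤ d) (ht : 0 ≤ t)
    (hX : ∀ A B : Finset α, t ≤ #A → t ≤ #B → d * (#A * #B) ≤ #(X ∩ A ×ˢ B)) (A B : Finset α) :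
    d * (#A * #B) ≤ #(X ∩ A ×ˢ B) + d * (t * (#A + #B)) := by
  by_cases hAB : t ≤ #A ∧ t ≤ #B
  · exact le_add_of_le_of_nonneg (hX A B hAB.1 hAB.2) (by positivity)
  · have hsmall : (#A * #B : ℝ) ≤ t * (#A + #B) := by
      rcases not_and_or.1 hAB with hA | hB
      · nlinarith [Nat.cast_nonneg (α := ℝ) #A, Nat.cast_nonneg (α := ℝ) #B]
      · nlinarith [Nat.cast_nonneg (α := ℝ) #A, Nat.cast_nonneg (α := ℝ) #B]
    exact le_add_of_nonneg_of_le (Nat.cast_nonneg _) (by gcongr)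

variable [Fintype α]

/-- The class of the points with colour `u` in the colouring `c`. -/
noncomputable def colourClass (c : α → κ) (u : κ) : Finset α := {x | c x = u}

theorem card_inter_eq_sum_blocks [Fintype κ] {c : α → κ} {P : Set (κ × κ)} {Z : Finset (α × α)}
    (hZ : ∀ z, z ∈ Z ↔ Prod.map c c z ∈ P) (X : Finset (α × α)) :
    #(X ∩ Z) = ∑ w with w ∈ P, #(X ∩ colourClass c w.1 ×ˢ colourClass c w.2) := by
  rw [card_eq_sum_card_fiberwise (f := Prod.map c c) (t := {w | w ∈ P})
    fun z hz => by simpa using (hZ z).1 (mem_inter.1 hz).2]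
  refine sum_congr rfl fun w hw => congrArg card (ext fun z => ?_)
  have hmem : Prod.map c c z = w → z ∈ Z := fun hzw => (hZ z).2 (hzw ▸ (mem_filter.1 hw).2)
  simp only [mem_filter, mem_inter, mem_product, colourClass, mem_univ, true_and,
    ← Prod.map_fst c c z, ← Prod.map_snd c c z, ← Prod.ext_iff]
  tauto

theorem sum_card_class_add_card_class [Fintype κ] (c : α → κ) :
    ∑ w : κ × κ, ((#(colourClass c w.1) : ℝ) + #(colourClass c w.2)) =
      2 * Fintype.card κ * Fintype.card α := by
  have hclass : ∑ u, (#(colourClass c u) : ℝ) = Fintype.card α := by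
    rw [← card_univ, card_eq_sum_card_fiberwise fun x _ => mem_univ (c x), Nat.cast_sum]
    rfl
  rw [Fintype.sum_prod_type]
  simp only [sum_add_distrib, sum_const, card_univ, nsmul_eq_mul, hclass, ← mul_sum]
  ring

theorem IsBlockUnion.mul_sub_le_card_inter {Q : ℕ} {Z X : Finset (α × α)} {d t : ℝ}
    (hZ : IsBlockUnion Q Z) (hd : 0 ≤ d) (ht : 0 ≤ t) (hX : IsLowerRegular t d X) :
    d * (#Z - t * (2 * Q * Fintype.card α)) ≤ #(X ∩ Z) := by
  obtain ⟨κ, _, c, P, hκ, hP⟩ := hZ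
  have hZ_card : (#Z : ℝ) = ∑ w with w ∈ P, (#(colourClass c w.1) : ℝ) * #(colourClass c w.2) := by
    rw [← univ_inter Z, card_inter_eq_sum_blocks hP]
    simp
  have hsizes : ∑ w with w ∈ P, ((#(colourClass c w.1) : ℝ) + #(colourClass c w.2)) ≤
      2 * Q * Fintype.card α :=
    calc _ ≤ ∑ w : κ × κ, ((#(colourClass c w.1) : ℝ) + #(colourClass c w.2)) :=
          sum_le_sum_of_subset_of_nonneg (subset_univ _) fun _ _ _ => by positivity
      _ = 2 * Fintype.card κ * Fintype.card α := sum_card_class_add_card_class c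
      _ ≤ _ := by gcongr
  have hblocks := sum_le_sum fun w (_ : w ∈ ({w | w ∈ P} : Finset (κ × κ))) =>
    mul_card_mul_card_le_add hd ht hX (colourClass c w.1) (colourClass c w.2)
  rw [sum_add_distrib, ← mul_sum, ← mul_sum, ← mul_sum, ← hZ_card, ← Nat.cast_sum,
    ← card_inter_eq_sum_blocks hP] at hblocks
  have herr := mul_le_mul_of_nonneg_left (mul_le_mul_of_nonneg_left hsizes ht) hd
  linarith

end LowerRegular

section Supersets

variable {E V : Type*} [Fintype V]

theorem descFactorial_le_pow_mul_descFactorial {y N : ℕ} {ρ : ℝ} (hρ0 : 0 ≤ ρ) (hρ1 : ρ ≤ 1)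
    (hy : (y : ℝ) ≤ ρ * N) (s : ℕ) :
    (y.descFactorial s : ℝ) ≤ ρ ^ s * N.descFactorial s := by
  have hyN : y ≤ N := by exact_mod_cast hy.trans (mul_le_of_le_one_left (Nat.cast_nonneg N) hρ1)
  induction s with
  | zero => simp
  | succ s ih =>
    have hfactor : ((y - s : ℕ) : ℝ) ≤ ρ * (N - s : ℕ) := by
      rcases le_total y s with hys | hsy
      · rw [Nat.sub_eq_zero_of_le hys, Nat.cast_zero]
        positivity
      · rw [Nat.cast_sub hsy, Nat.cast_sub (hsy.trans hyN)]
        nlinarith [mul_le_of_le_one_left (Nat.cast_nonneg s : (0 : ℝ) ≤ s) hρ1]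
    rw [Nat.descFactorial_succ, Nat.descFactorial_succ, Nat.cast_mul, Nat.cast_mul, pow_succ']
    calc ((y - s : ℕ) : ℝ) * y.descFactorial s
        ≤ ρ * (N - s : ℕ) * (ρ ^ s * N.descFactorial s) := by gcongr
      _ = ρ * ρ ^ s * ((N - s : ℕ) * N.descFactorial s) := by ring

theorem choose_le_pow_mul_choose {y N : ℕ} {ρ : ℝ} (hρ0 : 0 ≤ ρ) (hρ1 : ρ ≤ 1)
    (hy : (y : ℝ) ≤ ρ * N) (s : ℕ) : (y.choose s : ℝ) ≤ ρ ^ s * N.choose s := by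
  have h := descFactorial_le_pow_mul_descFactorial hρ0 hρ1 hy s
  simp only [Nat.descFactorial_eq_factorial_mul_choose, Nat.cast_mul] at h
  refine le_of_mul_le_mul_left (h.trans_eq ?_) (Nat.cast_pos.2 s.factorial_pos)
  ring

/-- The sets of size `m` containing `T`. -/
noncomputable def supersets (m : ℕ) (T : Finset V) : Finset (Finset V) :=
  {X ∈ powersetCard m univ | T ⊆ X}

variable {m s : ℕ} {T X Y : Finset V} {ρ : ℝ}

theorem mem_supersets : X ∈ supersets m T ↔ T ⊆ X ∧ #X = m := by
  simp [supersets, and_comm]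

theorem card_supersets (hT : #T ≤ m) :
    #(supersets m T) = (Fintype.card V - #T).choose (m - #T) := by
  rw [supersets, card_filter_powersetCard_subset T univ m (subset_univ T) hT, card_univ]

theorem card_supersets_filter_le_choose_mul_choose (hs : #T + s ≤ m) (Y : Finset V) :
    #{X ∈ supersets m T | s ≤ #((X ∩ Y) \ T)} ≤
      (#Y).choose s * (Fintype.card V - #T - s).choose (m - #T - s) := by
  have hcover : {X ∈ supersets m T | s ≤ #((X ∩ Y) \ T)} ⊆
      (powersetCard s (Y \ T)).biUnion fun R => supersets m (T ∪ R) := by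
    intro X hX
    obtain ⟨hX, hs⟩ := mem_filter.1 hX
    obtain ⟨hTX, hXm⟩ := mem_supersets.1 hX
    obtain ⟨R, hR, hRs⟩ := exists_subset_card_eq hs
    refine mem_biUnion.2 ⟨R, mem_powersetCard.2 ⟨?_, hRs⟩, mem_supersets.2 ⟨?_, hXm⟩⟩
    · exact hR.trans (sdiff_subset_sdiff inter_subset_right Subset.rfl)
    · exact union_subset hTX (hR.trans (sdiff_subset.trans inter_subset_left))
  have hcard : ∀ R ∈ powersetCard s (Y \ T),
      #(supersets m (T ∪ R)) = (Fintype.card V - #T - s).choose (m - #T - s) := by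
    intro R hR
    obtain ⟨hRY, hRs⟩ := mem_powersetCard.1 hR
    have hTR : #(T ∪ R) = #T + s := by
      rw [card_union_of_disjoint (disjoint_sdiff.mono_right hRY), hRs]
    rw [card_supersets (hTR.trans_le hs), hTR, Nat.sub_sub, Nat.sub_sub]
  calc #{X ∈ supersets m T | s ≤ #((X ∩ Y) \ T)}
      ≤ ∑ R ∈ powersetCard s (Y \ T), #(supersets m (T ∪ R)) :=
        (card_le_card hcover).trans card_biUnion_le
    _ = (#(Y \ T)).choose s * (Fintype.card V - #T - s).choose (m - #T - s) := by
        rw [sum_congr rfl hcard, sum_const, card_powersetCard, smul_eq_mul]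
    _ ≤ _ := by
        gcongr
        exact sdiff_subset

theorem card_supersets_filter_le (hρ0 : 0 ≤ ρ) (hρ1 : ρ ≤ 1)
    (hY : (#Y : ℝ) ≤ ρ * (Fintype.card V - #T)) :
    (#{X ∈ supersets m T | s ≤ #((X ∩ Y) \ T)} : ℝ) ≤ 2 ^ m * ρ ^ s * #(supersets m T) := by
  rcases le_or_gt (#T + s) m with hs | hs
  · set N := Fintype.card V - #T with hN
    set r := m - #T
    have hYN : (#Y : ℝ) ≤ ρ * N := by rwa [hN, Nat.cast_sub (card_le_univ T)]
    have hrs : r.choose s ≤ 2 ^ m :=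
      (Nat.choose_le_two_pow _ _).trans (Nat.pow_le_pow_right two_pos (Nat.sub_le _ _))
    calc (#{X ∈ supersets m T | s ≤ #((X ∩ Y) \ T)} : ℝ)
        ≤ (#Y).choose s * (N - s).choose (r - s) :=
          mod_cast card_supersets_filter_le_choose_mul_choose hs Y
      _ ≤ ρ ^ s * N.choose s * (N - s).choose (r - s) := by
          gcongr
          exact choose_le_pow_mul_choose hρ0 hρ1 hYN s
      _ = ρ ^ s * (N.choose r * r.choose s) := by
          rw [mul_assoc]
          exact_mod_cast congrArg (fun x : ℕ => ρ ^ s * (x : ℝ))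
            (Nat.choose_mul (Nat.le_sub_of_add_le' hs)).symm
      _ ≤ ρ ^ s * (N.choose r * 2 ^ m) := by
          gcongr
          exact_mod_cast hrs
      _ = 2 ^ m * ρ ^ s * #(supersets m T) := by
          rw [card_supersets ((Nat.le_add_right _ _).trans hs)]
          ring
  · have hempty : {X ∈ supersets m T | s ≤ #((X ∩ Y) \ T)} = ∅ := by
      refine filter_eq_empty_iff.2 fun X hX hsX => hs.not_ge ?_
      obtain ⟨hTX, hXm⟩ := mem_supersets.1 hX
      calc #T + s ≤ #T + #(X \ T) := by
            gcongr
            exact hsX.trans (card_le_card (sdiff_subset_sdiff inter_subset_left Subset.rfl))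
        _ = m := by rw [add_comm, card_sdiff_add_card_eq_card hTX, hXm]
    rw [hempty, card_empty, Nat.cast_zero]
    positivity

theorem sum_card_supersets (m : ℕ) :
    ∑ T : Finset V, #(supersets m T) = 2 ^ m * (Fintype.card V).choose m := by
  calc ∑ T : Finset V, #(supersets m T) = ∑ X ∈ powersetCard m (univ : Finset V), #X.powerset := by
        simp only [supersets, card_filter]
        rw [sum_comm]
        simp only [← card_filter, filter_subset_univ]
    _ = 2 ^ m * (Fintype.card V).choose m := by
        rw [sum_congr rfl fun X hX => by rw [card_powerset, (mem_powersetCard.1 hX).2], sum_const,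
          card_powersetCard, card_univ, smul_eq_mul, mul_comm]

variable [Fintype E]

theorem sum_prod_card_supersets (m : ℕ) :
    ∑ T : E → Finset V, ∏ f, #(supersets m (T f)) =
      (2 ^ m * (Fintype.card V).choose m) ^ Fintype.card E := by
  have h := prod_univ_sum (fun _ : E => (univ : Finset (Finset V))) fun _ T => #(supersets m T)
  rw [prod_const, card_univ, sum_card_supersets] at h
  rw [h]
  exact sum_congr (by ext; simp) fun _ _ => rfl

theorem card_pi_supersets_le (hρ0 : 0 ≤ ρ) (hρ1 : ρ ≤ 1) {T : E → Finset V} {e : E}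
    (hY : (#Y : ℝ) ≤ ρ * (Fintype.card V - #(T e))) :
    (#{X : E → Finset V | (∀ f, X f ∈ supersets m (T f)) ∧ s ≤ #((X e ∩ Y) \ T e)} : ℝ) ≤
      2 ^ m * ρ ^ s * ∏ f, (#(supersets m (T f)) : ℝ) := by
  set 𝒰 : E → Finset (Finset V) := fun f =>
    {X ∈ supersets m (T f) | f = e → s ≤ #((X ∩ Y) \ T f)}
  have hfactor (f : E) :
      (#(𝒰 f) : ℝ) ≤ (if f = e then 2 ^ m * ρ ^ s else 1) * #(supersets m (T f)) := by
    rcases eq_or_ne f e with rfl | hf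
    · simpa only [𝒰, forall_const, if_true] using card_supersets_filter_le hρ0 hρ1 hY
    · simp only [𝒰, hf, IsEmpty.forall_iff, filter_true, if_false, one_mul, le_refl]
  calc (#{X : E → Finset V | (∀ f, X f ∈ supersets m (T f)) ∧ s ≤ #((X e ∩ Y) \ T e)} : ℝ)
      ≤ ∏ f, (#(𝒰 f) : ℝ) := by
        rw [← Nat.cast_prod, ← Fintype.card_piFinset]
        refine Nat.cast_le.2 (card_le_card fun X hX => Fintype.mem_piFinset.2 fun f => ?_)
        obtain ⟨hXT, hXs⟩ := (mem_filter.1 hX).2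
        exact mem_filter.2 ⟨hXT f, by rintro rfl; exact hXs⟩
    _ ≤ ∏ f, (if f = e then 2 ^ m * ρ ^ s else 1) * (#(supersets m (T f)) : ℝ) :=
        prod_le_prod (fun f _ => Nat.cast_nonneg _) fun f _ => hfactor f
    _ = 2 ^ m * ρ ^ s * ∏ f, (#(supersets m (T f)) : ℝ) := by
        rw [prod_mul_distrib, prod_ite_eq' univ e, if_pos (mem_univ e)]

/- For every `T`, the sets `X ⊇ T` that `T` can certify have an unusually large intersection with
`Y T`, which costs a factor `ρ ^ s`; choosing `T` inside `X` costs only a factor `2 ^ m` per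
coordinate. -/
theorem card_le_of_exists_certificate (hρ0 : 0 ≤ ρ) (hρ1 : ρ ≤ 1) {𝒳 : Finset (E → Finset V)}
    (e : (E → Finset V) → E) (Y : (E → Finset V) → Finset V) (hm : ∀ X ∈ 𝒳, ∀ f, #(X f) = m)
    (hY : ∀ X ∈ 𝒳, ∃ T ≤ X, s ≤ #((X (e T) ∩ Y T) \ T (e T)) ∧
      (#(Y T) : ℝ) ≤ ρ * (Fintype.card V - #(T (e T)))) :
    (#𝒳 : ℝ) ≤ 2 ^ m * ρ ^ s * (2 ^ m * (Fintype.card V).choose m) ^ Fintype.card E := by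
  set 𝒯 : Finset (E → Finset V) := {T | (#(Y T) : ℝ) ≤ ρ * (Fintype.card V - #(T (e T)))}
  set 𝒰 : (E → Finset V) → Finset (E → Finset V) := fun T =>
    {X | (∀ f, X f ∈ supersets m (T f)) ∧ s ≤ #((X (e T) ∩ Y T) \ T (e T))}
  have hcover : 𝒳 ⊆ 𝒯.biUnion 𝒰 := by
    intro X hX
    obtain ⟨T, hTX, hXs, hYT⟩ := hY X hX
    refine mem_biUnion.2 ⟨T, mem_filter.2 ⟨mem_univ T, hYT⟩, mem_filter.2 ⟨mem_univ X, ?_, hXs⟩⟩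
    exact fun f => mem_supersets.2 ⟨hTX f, hm X hX f⟩
  calc (#𝒳 : ℝ) ≤ ∑ T ∈ 𝒯, (#(𝒰 T) : ℝ) :=
        mod_cast (card_le_card hcover).trans card_biUnion_le
    _ ≤ ∑ T ∈ 𝒯, 2 ^ m * ρ ^ s * ∏ f, (#(supersets m (T f)) : ℝ) :=
        sum_le_sum fun T hT => card_pi_supersets_le hρ0 hρ1 (mem_filter.1 hT).2
    _ ≤ ∑ T : E → Finset V, 2 ^ m * ρ ^ s * ∏ f, (#(supersets m (T f)) : ℝ) :=
        sum_le_sum_of_subset_of_nonneg (subset_univ 𝒯) fun T _ _ => by positivity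
    _ = 2 ^ m * ρ ^ s * (2 ^ m * (Fintype.card V).choose m) ^ Fintype.card E := by
        rw [← mul_sum]
        exact_mod_cast congrArg (fun x : ℕ => 2 ^ m * ρ ^ s * (x : ℝ)) (sum_prod_card_supersets m)

end Supersets

section TwoDensity

variable {ι : Type*} {H : SimpleGraph ι}

/-- The vertices of `H` covered by the edges in `S`. -/
noncomputable def covered (S : Finset H.edgeSet) : Finset ι :=
  S.biUnion fun e => (e : Sym2 ι).toFinset

variable {S : Finset H.edgeSet} {e : H.edgeSet}

theorem mem_covered {i : ι} : i ∈ covered S ↔ ∃ e ∈ S, i ∈ (e : Sym2 ι) := by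
  simp only [covered, mem_biUnion, Sym2.mem_toFinset]

theorem toFinset_subset_covered (he : e ∈ S) : (e : Sym2 ι).toFinset ⊆ covered S :=
  subset_biUnion_of_mem (fun e : H.edgeSet => (e : Sym2 ι).toFinset) he

theorem card_toFinset_edge (e : H.edgeSet) : #(e : Sym2 ι).toFinset = 2 :=
  Sym2.card_toFinset_of_not_isDiag _ (H.not_isDiag_of_mem_edgeSet e.2)

theorem two_le_card_covered (hS : S.Nonempty) : 2 ≤ #(covered S) := by
  obtain ⟨e, he⟩ := hS
  exact (card_toFinset_edge e).symm.trans_le (card_le_card (toFinset_subset_covered he))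

theorem three_le_card_covered (hS : 1 < #S) : 3 ≤ #(covered S) := by
  by_contra! hcard
  have hcovered : ∀ e ∈ S, (e : Sym2 ι).toFinset = covered S := fun e he =>
    eq_of_subset_of_card_le (toFinset_subset_covered he)
      ((Nat.le_of_lt_succ hcard).trans_eq (card_toFinset_edge e).symm)
  obtain ⟨e, he, f, hf, hef⟩ := one_lt_card.1 hS
  refine hef (Subtype.ext (Sym2.ext fun i => ?_))
  rw [← Sym2.mem_toFinset, ← Sym2.mem_toFinset, hcovered e he, hcovered f hf]

theorem card_covered_le (S : Finset H.edgeSet) : #(covered S) ≤ 2 * #S := by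
  calc #(covered S) ≤ ∑ e ∈ S, #(e : Sym2 ι).toFinset := card_biUnion_le
    _ = 2 * #S := by simp only [card_toFinset_edge, sum_const, smul_eq_mul, mul_comm]

variable [Fintype ι]

theorem card_sub_one_le_m2_mul (hS : 1 < #S) :
    (#S : ℝ) - 1 ≤ m2 H * (#(covered S) - 2) := by
  have hpos : (0 : ℝ) < #(covered S) - 2 := by
    have : (3 : ℝ) ≤ #(covered S) := mod_cast three_le_card_covered hS
    linarith
  set E := {e : Sym2 ι // e ∈ H.edgeSet ∧ ∀ v ∈ e, v ∈ covered S}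
  have hcard : #S ≤ Nat.card E := by
    rw [← Fintype.card_coe, ← Nat.card_eq_fintype_card]
    refine Nat.card_le_card_of_injective
      (fun e : S => (⟨e, e.1.2, fun v hv => mem_covered.2 ⟨e, e.2, hv⟩⟩ : E)) fun e f hef => ?_
    exact Subtype.ext (Subtype.ext (congrArg (fun x : E => x.1) hef))
  have hbdd : BddAbove {x : ℝ | ∃ s : Finset ι, 3 ≤ #s ∧
      x = ((Nat.card {e : Sym2 ι // e ∈ H.edgeSet ∧ ∀ v ∈ e, v ∈ s} : ℝ) - 1) / (#s - 2)} := by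
    refine ((Set.finite_range fun s : Finset ι =>
      ((Nat.card {e : Sym2 ι // e ∈ H.edgeSet ∧ ∀ v ∈ e, v ∈ s} : ℝ) - 1) /
        (#s - 2)).subset ?_).bddAbove
    rintro x ⟨s, _, rfl⟩
    exact ⟨s, rfl⟩
  have hm2 : ((Nat.card E : ℝ) - 1) / (#(covered S) - 2) ≤ m2 H :=
    le_csSup hbdd ⟨covered S, three_le_card_covered hS, rfl⟩
  rw [← div_le_iff₀ hpos]
  refine le_trans ?_ hm2
  gcongr

theorem m2_nonpos_of_subsingleton (hH : Subsingleton H.edgeSet) : m2 H ≤ 0 := by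
  refine Real.sSup_nonpos ?_
  rintro x ⟨s, hs, rfl⟩
  have hsub : Subsingleton {e : Sym2 ι // e ∈ H.edgeSet ∧ ∀ v ∈ e, v ∈ s} :=
    ⟨fun e f => Subtype.ext (congrArg (fun x : H.edgeSet => x.1)
      (Subsingleton.elim (⟨e, e.2.1⟩ : H.edgeSet) ⟨f, f.2.1⟩))⟩
  have hcard : (Nat.card {e : Sym2 ι // e ∈ H.edgeSet ∧ ∀ v ∈ e, v ∈ s} : ℝ) ≤ 1 := by
    exact_mod_cast Finite.card_le_one_iff_subsingleton.2 hsub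
  have hs' : (3 : ℝ) ≤ #s := mod_cast hs
  exact div_nonpos_of_nonpos_of_nonneg (by linarith) (by linarith)

theorem one_div_m2_le_two (H : SimpleGraph ι) : 1 / m2 H ≤ 2 := by
  rcases subsingleton_or_nontrivial H.edgeSet with hsub | hnt
  · exact (one_div_nonpos.2 (m2_nonpos_of_subsingleton hsub)).trans zero_le_two
  · obtain ⟨e, f, hef⟩ := exists_pair_ne H.edgeSet
    have hcard : #({e, f} : Finset H.edgeSet) = 2 := card_pair hef
    have hm2 := card_sub_one_le_m2_mul (hcard.symm ▸ one_lt_two)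
    have hcov3 : (3 : ℝ) ≤ #(covered {e, f}) :=
      mod_cast three_le_card_covered (hcard.symm ▸ one_lt_two)
    have hcov4 : (#(covered {e, f}) : ℝ) ≤ 4 := by
      exact_mod_cast (card_covered_le {e, f}).trans_eq (by rw [hcard])
    rw [hcard, Nat.cast_two] at hm2
    have hhalf : 1 / 2 ≤ m2 H := by nlinarith
    rw [div_le_iff₀ (by linarith)]
    linarith

/- For `#S > 1` this is the inequality `#S - 1 ≤ m2 H * (#(covered S) - 2)` in exponential form. -/
theorem one_le_pow_mul_pow_of_rpow_le {x q : ℝ} (hx : 1 ≤ x) (hq : x ^ (-(1 / m2 H)) ≤ q)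
    (S : Finset H.edgeSet) : 1 ≤ x ^ (#(covered S) - 2) * q ^ (#S - 1) := by
  rcases le_or_gt #S 1 with hS | hS
  · simpa [Nat.sub_eq_zero_of_le hS] using one_le_pow₀ hx
  have hm2 := card_sub_one_le_m2_mul hS
  have hcov : (3 : ℝ) ≤ #(covered S) := mod_cast three_le_card_covered hS
  have hS' : (1 : ℝ) < #S := mod_cast hS
  have hm2pos : 0 < m2 H := by
    by_contra! hneg
    nlinarith
  have hexp : (#S - 1) / m2 H ≤ #(covered S) - 2 := by
    rwa [div_le_iff₀' hm2pos]
  have hcast : ((#(covered S) - 2 : ℕ) : ℝ) = #(covered S) - 2 :=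
    Nat.cast_sub (two_le_card_covered (card_pos.1 (zero_lt_one.trans hS)))
  have hcast' : ((#S - 1 : ℕ) : ℝ) = #S - 1 := Nat.cast_pred (zero_lt_one.trans hS)
  calc 1 ≤ x ^ ((#(covered S) - 2) + -(1 / m2 H) * (#S - 1)) := by
        refine Real.one_le_rpow hx ?_
        rw [div_eq_mul_one_div, mul_comm] at hexp
        linarith
    _ = x ^ (#(covered S) - 2) * (x ^ (-(1 / m2 H))) ^ (#S - 1) := by
        rw [Real.rpow_add (by linarith), Real.rpow_mul (by linarith), ← hcast, ← hcast',
          Real.rpow_natCast, Real.rpow_natCast]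
    _ ≤ x ^ (#(covered S) - 2) * q ^ (#S - 1) := by gcongr

end TwoDensity

section Copies

variable {ι α : Type*} {H : SimpleGraph ι} [Fintype ι]

/-- The copy of `H` given by `ψ`, as a set of vertices of the hypergraph of copies, whose vertices
are the potential edges of the blow-up of `H` with parts `α`. -/
noncomputable def copyEdges (H : SimpleGraph ι) (ψ : ι → α) : Finset (Σ _ : H.edgeSet, α × α) :=
  univ.sigma fun e => {edgeImage ψ e}

variable {ψ φ : ι → α} {S : Finset (Σ _ : H.edgeSet, α × α)}

theorem mem_copyEdges {z : Σ _ : H.edgeSet, α × α} :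
    z ∈ copyEdges H ψ ↔ z.2 = edgeImage ψ z.1 := by
  simp [copyEdges]

theorem card_copyEdges (H : SimpleGraph ι) (ψ : ι → α) :
    #(copyEdges H ψ) = Fintype.card H.edgeSet := by
  simp [copyEdges]

theorem copyEdges_subset_iff : copyEdges H ψ ⊆ S ↔ ∀ e, ⟨e, edgeImage ψ e⟩ ∈ S :=
  ⟨fun h _ => h (mem_copyEdges.2 rfl), fun h z hz => by
    simpa only [← mem_copyEdges.1 hz] using h z.1⟩

theorem card_image_fst_of_subset_copyEdges (hS : S ⊆ copyEdges H ψ) :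
    #(S.image Sigma.fst) = #S := by
  refine card_image_of_injOn ?_
  rintro ⟨e, z⟩ hz ⟨f, w⟩ hw (rfl : e = f)
  exact Sigma.ext rfl (heq_of_eq ((mem_copyEdges.1 (hS hz)).trans (mem_copyEdges.1 (hS hw)).symm))

theorem eq_of_mem_covered (hψ : S ⊆ copyEdges H ψ) (hφ : S ⊆ copyEdges H φ) {i : ι}
    (hi : i ∈ covered (S.image Sigma.fst)) : ψ i = φ i := by
  obtain ⟨e, he, hie⟩ := mem_covered.1 hi
  obtain ⟨z, hz, rfl⟩ := mem_image.1 he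
  have h : edgeImage ψ z.1 = edgeImage φ z.1 :=
    (mem_copyEdges.1 (hψ hz)).symm.trans (mem_copyEdges.1 (hφ hz))
  exact edgeImage_eq_edgeImage_iff.1 h i hie

variable [Fintype α]

theorem card_le_pow_of_eqOn {s : Finset ι} {F : Finset (ι → α)} (φ : ι → α)
    (hF : ∀ ψ ∈ F, ∀ i ∈ s, ψ i = φ i) : #F ≤ Fintype.card α ^ (Fintype.card ι - #s) := by
  calc #F ≤ #(univ : Finset ({i // i ∉ s} → α)) := by
        refine card_le_card_of_injOn (fun ψ i => ψ i.1) (fun _ _ => mem_coe.2 (mem_univ _)) ?_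
        intro ψ hψ ψ' hψ' heq
        funext i
        by_cases hi : i ∈ s
        · rw [hF ψ hψ i hi, hF ψ' hψ' i hi]
        · exact congrFun heq ⟨i, hi⟩
    _ = Fintype.card α ^ (Fintype.card ι - #s) := by
        rw [card_univ, Fintype.card_fun, Fintype.card_subtype_compl, Fintype.card_coe]

theorem card_copies_mul_sq_le [Nonempty α] {q : ℝ}
    (hq : (Fintype.card α : ℝ) ^ (-(1 / m2 H)) ≤ q) (hS : S.Nonempty) :
    (#{ψ : ι → α | S ⊆ copyEdges H ψ} : ℝ) * Fintype.card α ^ 2 ≤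
      Fintype.card α ^ Fintype.card ι * q ^ (#S - 1) := by
  have hα : (1 : ℝ) ≤ Fintype.card α := mod_cast Fintype.card_pos
  have hq0 : 0 ≤ q := (Real.rpow_nonneg (by linarith) _).trans hq
  rcases ({ψ : ι → α | S ⊆ copyEdges H ψ} : Finset (ι → α)).eq_empty_or_nonempty with h | ⟨φ, hφ⟩
  · rw [h, card_empty, Nat.cast_zero, zero_mul]
    positivity
  replace hφ := (mem_filter.1 hφ).2
  set n : ℝ := (Fintype.card α : ℝ)
  set v := #(covered (S.image Sigma.fst))
  have hv : 2 ≤ v := two_le_card_covered (hS.image _)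
  have hvι : v ≤ Fintype.card ι := card_le_univ _
  have hdensity : 1 ≤ n ^ (v - 2) * q ^ (#S - 1) := by
    rw [← card_image_fst_of_subset_copyEdges hφ]
    exact one_le_pow_mul_pow_of_rpow_le hα hq _
  have hcount : (#{ψ : ι → α | S ⊆ copyEdges H ψ} : ℝ) ≤ n ^ (Fintype.card ι - v) := by
    rw [← Nat.cast_pow, Nat.cast_le]
    exact card_le_pow_of_eqOn φ fun ψ hψ i hi => eq_of_mem_covered (mem_filter.1 hψ).2 hφ hi
  calc (#{ψ : ι → α | S ⊆ copyEdges H ψ} : ℝ) * n ^ 2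
      ≤ n ^ (Fintype.card ι - v) * n ^ 2 * (n ^ (v - 2) * q ^ (#S - 1)) := by
        refine (mul_le_mul_of_nonneg_right hcount (by positivity)).trans ?_
        exact le_mul_of_one_le_right (by positivity) hdensity
    _ = n ^ (Fintype.card ι - v + 2 + (v - 2)) * q ^ (#S - 1) := by
        rw [pow_add, pow_add]
        ring
    _ = n ^ Fintype.card ι * q ^ (#S - 1) := by
        congr 2
        omega

/-- The hypergraph of copies of `H`: the weight of `A` is the fraction of the maps `ψ` whose copy
is `A`. -/
noncomputable def copyWeight (H : SimpleGraph ι) (A : Finset (Σ _ : H.edgeSet, α × α)) : ℝ :=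
  #{ψ : ι → α | copyEdges H ψ = A} / Fintype.card α ^ Fintype.card ι

theorem copyWeight_ne_zero {A : Finset (Σ _ : H.edgeSet, α × α)} :
    copyWeight H A ≠ 0 → ∃ ψ, copyEdges H ψ = A := by
  intro hA
  by_contra! h
  exact hA (by simp [copyWeight, h])

theorem sum_copyWeight (𝒜 : Finset (Finset (Σ _ : H.edgeSet, α × α))) :
    ∑ A ∈ 𝒜, copyWeight H A =
      #{ψ : ι → α | copyEdges H ψ ∈ 𝒜} / Fintype.card α ^ Fintype.card ι := by
  have hfibres := card_eq_sum_card_fiberwise (f := copyEdges H)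
    (s := {ψ : ι → α | copyEdges H ψ ∈ 𝒜}) (t := 𝒜) fun ψ hψ => (mem_filter.1 hψ).2
  simp only [copyWeight]
  rw [← sum_div, hfibres, Nat.cast_sum]
  congr 1
  refine sum_congr rfl fun A hA => ?_
  rw [filter_filter]
  congr! 3 with ψ
  exact ⟨fun h => ⟨h ▸ hA, h⟩, And.right⟩

theorem isSpread_copyWeight [Nonempty α] [Nonempty H.edgeSet] {q : ℝ}
    (hq : (Fintype.card α : ℝ) ^ (-(1 / m2 H)) ≤ q) :
    IsSpread (Fintype.card H.edgeSet) (Fintype.card H.edgeSet) q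
      (Fintype.card H.edgeSet * Fintype.card α ^ 2)
      (copyWeight (α := α) H) where
  nonneg A := by
    unfold copyWeight
    positivity
  card_eq hA := by
    obtain ⟨ψ, rfl⟩ := copyWeight_ne_zero hA
    exact card_copyEdges H ψ
  codeg_le {S} hS := by
    have _ : (0 : ℝ) < Fintype.card α := mod_cast Fintype.card_pos
    have hH : (0 : ℝ) < Fintype.card H.edgeSet := mod_cast Fintype.card_pos
    have hcodeg := card_copies_mul_sq_le hq hS
    rw [codeg, sum_copyWeight]
    simp only [mem_filter, mem_univ, true_and]
    rw [mul_div_mul_left _ _ hH.ne', div_le_div_iff₀ (by positivity) (by positivity)]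
    exact hcodeg.trans_eq (mul_comm _ _)

theorem exists_container_of_no_copy (H : SimpleGraph ι) [Nonempty H.edgeSet] {γ : ℝ}
    (hγ : 0 < γ) :
    ∃ L > 0, ∀ (α : Type*) [Fintype α] [Nonempty α] (q : ℝ),
      (Fintype.card α : ℝ) ^ (-(1 / m2 H)) ≤ q →
        ∃ D : (H.edgeSet → Finset (α × α)) → H.edgeSet → Finset (α × α),
          ∀ X : H.edgeSet → Finset (α × α), (∀ ψ, ∃ e, edgeImage ψ e ∉ X e) →
            ∃ T ≤ X, (∀ e, (#(T e) : ℝ) ≤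
                L * (q * (Fintype.card H.edgeSet * (Fintype.card α : ℝ) ^ 2) + 1)) ∧
              X ≤ D T ∧ (#{ψ : ι → α | ∀ e, edgeImage ψ e ∈ D T e} : ℝ) <
                γ * (Fintype.card α : ℝ) ^ Fintype.card ι := by
  have hH : (0 : ℝ) < Fintype.card H.edgeSet := mod_cast Fintype.card_pos
  obtain ⟨L, hL, hcontainer⟩ := exists_hasFingerprint_container (Fintype.card H.edgeSet) hH hγ
  refine ⟨L, hL, fun α _ _ q hq => ?_⟩
  have hα : (0 : ℝ) < Fintype.card α := mod_cast Fintype.card_pos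
  obtain ⟨D, hD⟩ := (hcontainer (Σ _ : H.edgeSet, α × α) _ q (copyWeight H) (by positivity)
    ((Real.rpow_pos_of_pos hα _).trans_le hq) (by simp [sq]) (isSpread_copyWeight hq)).exists_output
  let slice (S : Finset (Σ _ : H.edgeSet, α × α)) (e : H.edgeSet) : Finset (α × α) :=
    {z | ⟨e, z⟩ ∈ S}
  have hslice {S e z} : z ∈ slice S e ↔ ⟨e, z⟩ ∈ S := mem_filter_univ z
  have hglue (S : Finset (Σ _ : H.edgeSet, α × α)) : univ.sigma (slice S) = S := by
    ext z
    rw [mem_sigma, hslice, and_iff_right (mem_univ _)]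
  refine ⟨fun T => slice (D (univ.sigma T)), fun X hX => ?_⟩
  obtain ⟨T, hTX, hTcard, hDT⟩ := hD (univ.sigma X)
  obtain ⟨hXD, hcopies⟩ := hDT fun A hA hAX => by
    obtain ⟨ψ, rfl⟩ := copyWeight_ne_zero hA
    obtain ⟨e, he⟩ := hX ψ
    exact he (mem_sigma.1 (copyEdges_subset_iff.1 hAX e)).2
  refine ⟨slice T, fun e z hz => (mem_sigma.1 (hTX (hslice.1 hz))).2, fun e => ?_, fun e z hz => ?_,
    ?_⟩
  · refine le_trans (Nat.cast_le.2 ?_) hTcard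
    exact card_le_card_of_injOn (fun z => ⟨e, z⟩) (fun z hz => hslice.1 hz)
      fun z _ w _ hzw => eq_of_heq (Sigma.mk.inj hzw).2
  · rw [hslice, hglue]
    exact hXD (mem_sigma.2 ⟨mem_univ e, hz⟩)
  · rw [sum_copyWeight, div_lt_iff₀ (by positivity)] at hcopies
    simpa only [hglue, hslice, ← copyEdges_subset_iff, mem_powerset] using hcopies

end Copies

section Counting

variable {ι : Type*} [Fintype ι]

theorem exists_certificate_of_no_copy (H : SimpleGraph ι) [Nonempty H.edgeSet] {δ : ℝ}
    (hδ : 0 < δ) :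
    ∃ L > 0, ∃ Q > 0, ∀ (α : Type*) [Fintype α] [Nonempty α] (q : ℝ),
      (Fintype.card α : ℝ) ^ (-(1 / m2 H)) ≤ q →
        ∃ (e : (H.edgeSet → Finset (α × α)) → H.edgeSet)
          (Y : (H.edgeSet → Finset (α × α)) → Finset (α × α)),
          ∀ X : H.edgeSet → Finset (α × α), (∀ ψ, ∃ e, edgeImage ψ e ∉ X e) →
            ∃ T ≤ X, ∃ Z, IsBlockUnion Q Z ∧ (∀ f, (#(T f) : ℝ) ≤
                L * (q * (Fintype.card H.edgeSet * (Fintype.card α : ℝ) ^ 2) + 1)) ∧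
              1 / (2 * Fintype.card H.edgeSet) * (Fintype.card α : ℝ) ^ 2 ≤ #Z ∧
              (#(Y T) : ℝ) ≤ δ * (Fintype.card α : ℝ) ^ 2 ∧ X (e T) ∩ Z ⊆ Y T := by
  obtain ⟨Q, hQ, hblocks⟩ := exists_isBlockUnion_of_card_lt H hδ
  obtain ⟨L, hL, hcontainer⟩ := exists_container_of_no_copy H
    (γ := δ ^ Fintype.card H.edgeSet / 4) (by positivity)
  refine ⟨L, hL, Q, hQ, fun α _ _ q hq => ?_⟩
  obtain ⟨D, hD⟩ := hcontainer α q hq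
  choose! e Z hZ hZcard hDZ using fun T => hblocks α (D T)
  refine ⟨e, fun T => D T (e T) ∩ Z T, fun X hX => ?_⟩
  obtain ⟨T, hTX, hTcard, hXD, hcopies⟩ := hD X hX
  exact ⟨T, hTX, Z T, hZ T hcopies, hTcard, hZcard T hcopies, hDZ T hcopies,
    inter_subset_inter_right (hXD (e T))⟩

variable {α : Type*} [Fintype α]

theorem IsBlockUnion.ceil_le_card_sdiff [Nonempty α] {k ε : ℝ} (hk : 0 < k) (hε : 0 ≤ ε)
    {Q m : ℕ} (hεQ : ε * (2 * Q) ≤ 1 / (4 * k)) {T X Y Z : Finset (α × α)} (hZ : IsBlockUnion Q Z)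
    (hX : IsLowerRegular (ε * Fintype.card α) (m / (Fintype.card α : ℝ) ^ 2 / 2) X)
    (hZcard : 1 / (2 * k) * (Fintype.card α : ℝ) ^ 2 ≤ #Z) (hT : (#T : ℝ) ≤ m / (16 * k))
    (hY : X ∩ Z ⊆ Y) : ⌈m / (16 * k)⌉₊ ≤ #((X ∩ Y) \ T) := by
  have hn : (0 : ℝ) < Fintype.card α := mod_cast Fintype.card_pos
  set n : ℝ := (Fintype.card α : ℝ)
  have hinter : m / (8 * k) ≤ #(X ∩ Y) := by
    calc m / (8 * k) = m / n ^ 2 / 2 * (1 / (2 * k) * n ^ 2 - 1 / (4 * k) * n ^ 2) := by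
          field_simp
          ring
      _ ≤ m / n ^ 2 / 2 * (#Z - ε * (2 * Q) * n ^ 2) := by gcongr
      _ = m / n ^ 2 / 2 * (#Z - ε * n * (2 * Q * n)) := by ring
      _ ≤ #(X ∩ Z) := hZ.mul_sub_le_card_inter (by positivity) (by positivity) hX
      _ ≤ #(X ∩ Y) := mod_cast card_le_card (subset_inter inter_subset_left hY)
  have hsdiff : (#(X ∩ Y) : ℝ) ≤ #((X ∩ Y) \ T) + #T := mod_cast card_le_card_sdiff_add_card
  rw [Nat.ceil_le]
  have hsplit : m / (8 * k) = m / (16 * k) + m / (16 * k) := by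
    field_simp
    ring
  linarith

theorem fingerprint_bound_le {k L n m : ℝ} (hk : 1 ≤ k) (hL : 0 < L) (hn : 0 < n)
    (hm : 32 * k ^ 2 * L ≤ m) :
    L * (m / (32 * k ^ 2 * L * n ^ 2) * (k * n ^ 2) + 1) ≤ m / (16 * k) := by
  have hL' : L ≤ m / (32 * k) := by
    rw [le_div_iff₀ (by positivity)]
    nlinarith [mul_le_mul_of_nonneg_right (le_self_pow₀ hk two_ne_zero) hL.le]
  calc L * (m / (32 * k ^ 2 * L * n ^ 2) * (k * n ^ 2) + 1) = m / (32 * k) + L := by field_simp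
    _ ≤ m / (32 * k) + m / (32 * k) := by gcongr
    _ = m / (16 * k) := by
        field_simp
        ring

theorem rpow_neg_le_div {C x a m : ℝ} (hC : 0 < C) (hx : 0 < x) (h : C * x ^ (2 - a) ≤ m) :
    x ^ (-a) ≤ m / (C * x ^ 2) := by
  rw [le_div_iff₀ (by positivity)]
  refine le_of_eq_of_le ?_ h
  rw [sub_eq_add_neg, Real.rpow_add hx, Real.rpow_two]
  ring

/-- The counterpart of `𝒢*(H, n, m, m / n², ε)` with regularity weakened to half the expected
density from below: the edge sets of a graph on the blow-up of `H` with parts `α`, indexed by the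
edges of `H`, that have size `m`, are lower regular and contain no canonical copy of `H`. -/
noncomputable def lowerRegularCopyFree (H : SimpleGraph ι) (α : Type*) [Fintype α] (m : ℕ)
    (ε : ℝ) : Finset (H.edgeSet → Finset (α × α)) :=
  {X | (∀ e, #(X e) = m) ∧
    (∀ e, IsLowerRegular (ε * Fintype.card α) (m / (Fintype.card α : ℝ) ^ 2 / 2) (X e)) ∧
    ∀ ψ, ∃ e, edgeImage ψ e ∉ X e}

theorem mem_lowerRegularCopyFree {H : SimpleGraph ι} {m : ℕ} {ε : ℝ}
    {X : H.edgeSet → Finset (α × α)} :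
    X ∈ lowerRegularCopyFree H α m ε ↔ (∀ e, #(X e) = m) ∧
      (∀ e, IsLowerRegular (ε * Fintype.card α) (m / (Fintype.card α : ℝ) ^ 2 / 2) (X e)) ∧
      ∀ ψ, ∃ e, edgeImage ψ e ∉ X e :=
  mem_filter_univ X

/- A fingerprint of `X` takes up at most half of the at least `m / (8 * k)` elements that some
`X e` has in the set `Y` of density at most `δ`, where `k` is the number of edges of `H`. -/
theorem exists_card_lowerRegularCopyFree_le (H : SimpleGraph ι) [Nonempty H.edgeSet] {δ : ℝ}
    (hδ : 0 < δ) (hδ' : 2 * δ ≤ 1) :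
    ∃ C > 0, ∃ ε > 0, ε ≤ 1 / 2 ∧ ∀ (α : Type*) [Fintype α] [Nonempty α] (m : ℕ),
      C * (Fintype.card α : ℝ) ^ (2 - 1 / m2 H) ≤ m →
        (#(lowerRegularCopyFree H α m ε) : ℝ) ≤
          2 ^ m * (2 * δ) ^ ⌈(m : ℝ) / (16 * Fintype.card H.edgeSet)⌉₊ *
            (2 ^ m * (Fintype.card α ^ 2).choose m) ^ Fintype.card H.edgeSet := by
  obtain ⟨L, hL, Q, hQ, hcertificate⟩ := exists_certificate_of_no_copy H hδ
  have hk : (1 : ℝ) ≤ Fintype.card H.edgeSet := mod_cast Fintype.card_pos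
  set k : ℝ := (Fintype.card H.edgeSet : ℝ)
  set ε : ℝ := min (1 / 2) (1 / (4 * k) / (2 * Q))
  have hε : 0 < ε := by positivity
  have hεQ : ε * (2 * Q) ≤ 1 / (4 * k) := (le_div_iff₀ (by positivity)).1 (min_le_right _ _)
  refine ⟨32 * k ^ 2 * L, by positivity, ε, hε, min_le_left _ _, fun α _ _ m hm => ?_⟩
  have hn : (1 : ℝ) ≤ Fintype.card α := mod_cast Fintype.card_pos
  have hCm : 32 * k ^ 2 * L ≤ m := (le_mul_of_one_le_right (by positivity)
    (Real.one_le_rpow hn (by linarith [one_div_m2_le_two H]))).trans hm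
  obtain ⟨e, Y, hY⟩ := hcertificate α _ (rpow_neg_le_div (by positivity) (by positivity) hm)
  have hcardV : Fintype.card (α × α) = Fintype.card α ^ 2 := by rw [Fintype.card_prod, sq]
  rw [← hcardV]
  refine card_le_of_exists_certificate (by positivity) hδ' e Y
    (fun X hX => (mem_lowerRegularCopyFree.1 hX).1) fun X hX => ?_
  obtain ⟨hXcard, hXreg, hXcopy⟩ := mem_lowerRegularCopyFree.1 hX
  obtain ⟨T, hTX, Z, hZ, hTcard, hZcard, hYcard, hXZ⟩ := hY X hXcopy
  have hTm := (hTcard (e T)).trans (fingerprint_bound_le hk hL (by positivity) hCm)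
  refine ⟨T, hTX, ?_, hYcard.trans ?_⟩
  · convert hZ.ceil_le_card_sdiff (by positivity) hε.le hεQ (hXreg _) hZcard hTm hXZ
  · have hmV : (m : ℝ) ≤ Fintype.card (α × α) := by
      rw [← hXcard (e T)]
      exact mod_cast card_le_univ _
    rw [hcardV, Nat.cast_pow] at hmV ⊢
    have hTV : (#(T (e T)) : ℝ) ≤ (Fintype.card α : ℝ) ^ 2 / 2 :=
      hTm.trans (div_le_div₀ (by positivity) hmV two_pos (by linarith))
    nlinarith

theorem two_pow_mul_ceil_pow_le {k m : ℕ} (hk : 0 < k) {b β : ℝ} (hb : 0 ≤ b) (hb' : b ≤ 1)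
    (hβ : 2 ^ (k + 1) * b ≤ β) (N : ℝ) (hN : 0 ≤ N) :
    2 ^ m * (b ^ (16 * k)) ^ ⌈(m : ℝ) / (16 * k)⌉₊ * (2 ^ m * N) ^ k ≤ β ^ m * N ^ k := by
  have hm : m ≤ 16 * k * ⌈(m : ℝ) / (16 * k)⌉₊ := by
    have := Nat.le_ceil ((m : ℝ) / (16 * k))
    rw [div_le_iff₀' (by positivity)] at this
    exact_mod_cast this
  calc 2 ^ m * (b ^ (16 * k)) ^ ⌈(m : ℝ) / (16 * k)⌉₊ * (2 ^ m * N) ^ k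
      ≤ 2 ^ m * b ^ m * (2 ^ m * N) ^ k := by
        rw [← pow_mul]
        gcongr ?_ * ?_ * ?_
        exact pow_le_pow_of_le_one hb hb' hm
    _ = (2 ^ (k + 1) * b) ^ m * N ^ k := by
        rw [mul_pow, mul_pow, ← pow_mul, ← pow_mul]
        ring
    _ ≤ β ^ m * N ^ k := by gcongr

theorem exists_card_lowerRegularCopyFree_le_pow_mul (H : SimpleGraph ι) [Nonempty H.edgeSet]
    {β : ℝ} (hβ : 0 < β) :
    ∃ C > 0, ∃ ε > 0, ε ≤ 1 / 2 ∧ ∀ (α : Type*) [Fintype α] [Nonempty α] (m : ℕ),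
      C * (Fintype.card α : ℝ) ^ (2 - 1 / m2 H) ≤ m →
        (#(lowerRegularCopyFree H α m ε) : ℝ) ≤
          β ^ m * ((Fintype.card α ^ 2).choose m : ℝ) ^ Fintype.card H.edgeSet := by
  set k := Fintype.card H.edgeSet
  set b : ℝ := min 1 (β / 2 ^ (k + 1))
  have hb : 0 < b := by positivity
  have hbβ : 2 ^ (k + 1) * b ≤ β := (le_div_iff₀' (by positivity)).1 (min_le_right _ _)
  obtain ⟨C, hC, ε, hε, hε', hcount⟩ := exists_card_lowerRegularCopyFree_le H
    (δ := b ^ (16 * k) / 2) (by positivity)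
    ((mul_div_cancel₀ _ two_ne_zero).trans_le (pow_le_one₀ hb.le (min_le_left _ _)))
  refine ⟨C, hC, ε, hε, hε', fun α _ _ m hm => (hcount α m hm).trans ?_⟩
  rw [mul_div_cancel₀ _ two_ne_zero]
  exact two_pow_mul_ceil_pow_le Fintype.card_pos hb.le (min_le_left _ _) hbβ _ (by positivity)

end Counting

section Graphs

variable {ι α : Type*} {H : SimpleGraph ι}

theorem bipCount_map_sectR (G : SimpleGraph (ι × α)) (i j : ι) (A B : Finset α) :
    bipCount G (A.map (.sectR i α)) (B.map (.sectR j α)) =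
      #{z ∈ A ×ˢ B | G.Adj (i, z.1) (j, z.2)} := by
  rw [← card_map (Function.Embedding.prodMap (.sectR i α) (.sectR j α))]
  refine Nat.subtype_card _ ?_
  rintro ⟨⟨i', x⟩, ⟨j', y⟩⟩
  aesop

variable [Fintype α]

/-- The edges of `G` between the two parts that belong to the edge `e` of `H`. -/
noncomputable def edgePairs (H : SimpleGraph ι) (G : SimpleGraph (ι × α)) (e : H.edgeSet) :
    Finset (α × α) :=
  {z | G.Adj ((ends e).1, z.1) ((ends e).2, z.2)}

theorem mem_edgePairs {G : SimpleGraph (ι × α)} {e : H.edgeSet} {z : α × α} :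
    z ∈ edgePairs H G e ↔ G.Adj ((ends e).1, z.1) ((ends e).2, z.2) :=
  mem_filter_univ z

theorem bipCount_map_ends (G : SimpleGraph (ι × α)) (e : H.edgeSet) (A B : Finset α) :
    bipCount G (A.map (.sectR (ends e).1 α)) (B.map (.sectR (ends e).2 α)) =
      #(edgePairs H G e ∩ A ×ˢ B) := by
  rw [bipCount_map_sectR, edgePairs, filter_inter, univ_inter]

theorem bipCount_map_univ_ends (G : SimpleGraph (ι × α)) (e : H.edgeSet) :
    bipCount G (univ.map (.sectR (ends e).1 α)) (univ.map (.sectR (ends e).2 α)) =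
      #(edgePairs H G e) := by
  rw [bipCount_map_ends, univ_product_univ, inter_univ]

theorem of_adj_of_forall_ends {r : ι → ι → Prop} (hr : ∀ i j, r i j → r j i)
    (h : ∀ e : H.edgeSet, r (ends e).1 (ends e).2) {i j : ι} (hij : H.Adj i j) : r i j := by
  obtain ⟨e, he⟩ : ∃ e : H.edgeSet, s((ends e).1, (ends e).2) = s(i, j) :=
    ⟨⟨s(i, j), hij⟩, mk_ends _⟩
  rcases Sym2.eq_iff.1 he with ⟨rfl, rfl⟩ | ⟨rfl, rfl⟩
  · exact h e
  · exact hr _ _ (h e)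

theorem edgePairs_injOn :
    Set.InjOn (edgePairs H) {G : SimpleGraph (ι × α) | ∀ a b, G.Adj a b → H.Adj a.1 b.1} := by
  intro G hG G' hG' hGG'
  have hadj {i j : ι} : H.Adj i j → ∀ x y, G.Adj (i, x) (j, y) ↔ G'.Adj (i, x) (j, y) := by
    refine of_adj_of_forall_ends
      (r := fun i j => ∀ x y, G.Adj (i, x) (j, y) ↔ G'.Adj (i, x) (j, y)) ?_ fun e x y => ?_
    · intro i j h x y
      rw [G.adj_comm, h, G'.adj_comm]
    · rw [← mem_edgePairs (z := (x, y)), hGG', mem_edgePairs]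
  ext ⟨i, x⟩ ⟨j, y⟩
  exact ⟨fun h => (hadj (hG _ _ h) x y).1 h, fun h => (hadj (hG' _ _ h) x y).2 h⟩

variable {h n m : ℕ} {H : SimpleGraph (Fin h)} {G : SimpleGraph (Fin h × Fin n)} {p ε : ℝ}

theorem fibre_eq_map (i : Fin h) : fibre h n i = univ.map (.sectR i (Fin n)) := by
  ext ⟨j, x⟩
  simp [fibre, eq_comm]

theorem card_edgePairs (hG : InKLRFamily H m p ε G) (e : H.edgeSet) : #(edgePairs H G e) = m := by
  have hcount := (hG.2 _ _ (adj_ends e)).1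
  rwa [fibre_eq_map, fibre_eq_map, bipCount_map_univ_ends] at hcount

theorem isLowerRegular_edgePairs [NeZero n] (hε : 0 < ε) (hε' : ε ≤ 1 / 2)
    (hG : InKLRFamily H m (m / (n : ℝ) ^ 2) ε G) (e : H.edgeSet) :
    IsLowerRegular (ε * n) (m / (n : ℝ) ^ 2 / 2) (edgePairs H G e) := by
  intro A B hA hB
  have hn : (0 : ℝ) < n := mod_cast NeZero.pos n
  have hAB : (0 : ℝ) < #A * #B :=
    mul_pos ((by positivity : 0 < ε * n).trans_le hA) ((by positivity : 0 < ε * n).trans_le hB)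
  obtain ⟨hcount, hreg⟩ := hG.2 _ _ (adj_ends e)
  have hdensity := hreg (A.map (.sectR _ _)) (fibre_eq_map _ ▸ map_subset_map.2 (subset_univ A))
    (B.map (.sectR _ _)) (fibre_eq_map _ ▸ map_subset_map.2 (subset_univ B))
  rw [bipDensity, bipDensity, hcount, bipCount_map_ends, fibre_eq_map, fibre_eq_map]
    at hdensity
  simp only [card_map, card_univ, Fintype.card_fin, ← sq] at hdensity
  rw [← le_div_iff₀ hAB]
  have hp : (0 : ℝ) ≤ m / (n : ℝ) ^ 2 := by positivity
  have := (abs_le.1 (hdensity hA hB)).1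
  nlinarith

theorem exists_edgeImage_notMem_edgePairs (hG : ¬ HasCanonicalCopy H G) (ψ : Fin h → Fin n) :
    ∃ e, edgeImage ψ e ∉ edgePairs H G e := by
  by_contra! hcopy
  refine hG ⟨ψ, fun i j hij => ?_⟩
  exact of_adj_of_forall_ends (r := fun i j => G.Adj (i, ψ i) (j, ψ j)) (fun _ _ h => h.symm)
    (fun e => mem_edgePairs.1 (hcopy e)) hij

theorem card_copyFree_le_card_lowerRegularCopyFree [NeZero n] (hε : 0 < ε) (hε' : ε ≤ 1 / 2) :
    Nat.card {G : SimpleGraph (Fin h × Fin n) //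
        InKLRFamily H m ((m : ℝ) / (n : ℝ) ^ 2) ε G ∧ ¬ HasCanonicalCopy H G} ≤
      #(lowerRegularCopyFree H (Fin n) m ε) := by
  have hmem (G : {G : SimpleGraph (Fin h × Fin n) //
      InKLRFamily H m ((m : ℝ) / (n : ℝ) ^ 2) ε G ∧ ¬ HasCanonicalCopy H G}) :
      edgePairs H G.1 ∈ lowerRegularCopyFree H (Fin n) m ε := by
    obtain ⟨G, hG, hcopy⟩ := G
    refine mem_lowerRegularCopyFree.2 ⟨card_edgePairs hG, fun e => ?_,
      exists_edgeImage_notMem_edgePairs hcopy⟩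
    simpa only [Fintype.card_fin] using isLowerRegular_edgePairs hε hε' hG e
  rw [← Fintype.card_coe, ← Nat.card_eq_fintype_card]
  refine Nat.card_le_card_of_injective (fun G => ⟨_, hmem G⟩) fun G G' hGG' => ?_
  exact Subtype.ext (edgePairs_injOn G.2.1.1 G'.2.1.1 (congrArg Subtype.val hGG'))

end Graphs

end KLR

/-- Theorem 1.8: the Kohayakawa–Łuczak–Rödl conjecture. -/
theorem KLR_conjecture {h : ℕ} (hh : 3 ≤ h) (H : SimpleGraph (Fin h))
    (hedge : H.edgeSet.Nonempty) (β : ℝ) (hβ : 0 < β) :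
    ∃ C : ℝ, 0 < C ∧ ∃ n₀ : ℕ, ∃ ε : ℝ, 0 < ε ∧
      ∀ n : ℕ, n₀ ≤ n → ∀ m : ℕ, C * (n : ℝ) ^ ((2 : ℝ) - 1 / m2 H) ≤ (m : ℝ) →
        (Nat.card {G : SimpleGraph (Fin h × Fin n) //
            InKLRFamily H m ((m : ℝ) / (n : ℝ) ^ 2) ε G ∧ ¬ HasCanonicalCopy H G} : ℝ)
          ≤ β ^ m * (Nat.choose (n ^ 2) m : ℝ) ^ (Nat.card H.edgeSet) := by
  have := hedge.to_subtype
  obtain ⟨C, hC, ε, hε, hε', hcount⟩ := KLR.exists_card_lowerRegularCopyFree_le_pow_mul H hβ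
  refine ⟨C, hC, 1, ε, hε, fun n hn m hm => ?_⟩
  have : NeZero n := ⟨Nat.one_le_iff_ne_zero.1 hn⟩
  have hcard : Fintype.card (Fin n) = n := Fintype.card_fin n
  calc (Nat.card {G : SimpleGraph (Fin h × Fin n) //
          InKLRFamily H m ((m : ℝ) / (n : ℝ) ^ 2) ε G ∧ ¬ HasCanonicalCopy H G} : ℝ)
      ≤ (KLR.lowerRegularCopyFree H (Fin n) m ε).card :=
        Nat.cast_le.2 (KLR.card_copyFree_le_card_lowerRegularCopyFree hε hε')
    _ ≤ β ^ m * ((Fintype.card (Fin n) ^ 2).choose m : ℝ) ^ Fintype.card H.edgeSet :=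
        hcount (Fin n) m (hcard.symm ▸ hm)
    _ = β ^ m * (Nat.choose (n ^ 2) m : ℝ) ^ Nat.card H.edgeSet := by
        rw [hcard, Nat.card_eq_fintype_card]
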